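/- Let condition B hold, let v_ε → ∞ as ε → 0, and define κ̃_ε(t) = Σ_{i∈X} Σ_{n=1}^{[tπ_{ε,i}v_ε]} κ_{ε,i,n}, t ≥ 0. Then condition D₁ holds if and only if κ̃_ε(1) converges in distribution as ε → 0 to a nonnegative random variable θ₀ whose distribution is not concentrated at zero; in this case E e^{−sθ₀} = e^{−A(s)} for s ≥ 0, and moreover, for any 0 = t₀ ≤ t₁ ≤ … ≤ t_n < ∞ and s₁, …, s_n ≥ 0, E exp{−Σ_{r=1}^n s_r (κ̃_ε(t_r) − κ̃_ε(t_{r−1}))} → exp{−Σ_{r=1}^n A(s_r)(t_r − t_{r−1})} as ε → 0. -/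

import Mathlib

open MeasureTheory Filter Set
open scoped Topology ENNReal

noncomputable section

/-- Condition B: there exists a ring chain of states `c 0, c 1, …, c N = c 0`
containing all states of the phase space, with
`liminf_{ε→0+} p ε (c (k-1)) (c k) > 0` for `k = 1, …, N`. -/
def CondB {m : ℕ} (p : ℝ → Fin m → Fin m → ℝ) : Prop :=
  ∃ N : ℕ, 0 < N ∧ ∃ c : ℕ → Fin m, c N = c 0 ∧
    (∀ i : Fin m, ∃ k ≤ N, c k = i) ∧
    ∀ k < N, 0 < Filter.liminf (fun ε => p ε (c k) (c (k + 1))) (𝓝[>] (0 : ℝ))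

/-- `π` is a stationary distribution of the transition matrix `p`. -/
def IsStationaryDist {m : ℕ} (p : Fin m → Fin m → ℝ) (π : Fin m → ℝ) : Prop :=
  (∀ i, 0 ≤ π i) ∧ (∑ i, π i = 1) ∧ ∀ j, π j = ∑ i, π i * p i j

/-- `φ_ε(s) = Σ_i π_{ε,i} E_i e^{−sκ_{ε,1}}`, the stationary average of the Laplace
transforms of the sojourn times. -/
def lapPhi {m : ℕ} {Ω : Type} [MeasurableSpace Ω]
    (Pstart : ℝ → Fin m → Measure Ω) (κ : ℝ → ℕ → Ω → ℝ) (π : ℝ → Fin m → ℝ)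
    (ε s : ℝ) : ℝ :=
  ∑ i, π ε i * ∫ ω, Real.exp (-(s * κ ε 1 ω)) ∂(Pstart ε i)

/-- `hitTimes e i n` is the `(n+1)`-th hitting time `τ_{i,n+1}` of state `i` by the
trajectory `e`. -/
def hitTimes {m : ℕ} (e : ℕ → Fin m) (i : Fin m) : ℕ → ℕ
  | 0 => sInf {k | e k = i}
  | n + 1 => sInf {k | hitTimes e i n < k ∧ e k = i}

/-- `kHit η κ i n ω = κ_{ε,i,n+1} = κ_{ε, τ_{ε,i,n+1} + 1}`, the sojourn time attached to
the `(n+1)`-th visit of the embedded chain to state `i`. -/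
def kHit {m : ℕ} {Ω : Type} (η : ℕ → Ω → Fin m) (κ : ℕ → Ω → ℝ)
    (i : Fin m) (n : ℕ) (ω : Ω) : ℝ :=
  κ (hitTimes (fun k => η k ω) i n + 1) ω

/-- The process `κ̃_ε(t) = Σ_{i∈X} Σ_{n=1}^{[t π_{ε,i} v_ε]} κ_{ε,i,n}`. -/
def kTil {m : ℕ} {Ω : Type} (η : ℝ → ℕ → Ω → Fin m) (κ : ℝ → ℕ → Ω → ℝ)
    (π : ℝ → Fin m → ℝ) (v : ℝ → ℝ) (ε t : ℝ) (ω : Ω) : ℝ :=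
  ∑ i : Fin m, ∑ n ∈ Finset.range (Nat.floor (t * (π ε i * v ε))), kHit (η ε) (κ ε) i n ω


section MRP

variable {m : ℕ} {Ω : Type} [MeasurableSpace Ω]

/-- law of the first sojourn time on the event that the next state is `j` -/
def nuK (η : ℕ → Ω → Fin m) (κ : ℕ → Ω → ℝ) (P : Fin m → Measure Ω) (i j : Fin m) : Measure ℝ :=
  ((P i).restrict {ω | η 1 ω = j}).map (κ 1)

/-- Basic facts about a Markov renewal process at a fixed parameter. -/
structure IsMRP (η : ℕ → Ω → Fin m) (κ : ℕ → Ω → ℝ) (P : Fin m → Measure Ω) : Prop where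
  prob : ∀ i, IsProbabilityMeasure (P i)
  mη : ∀ n, Measurable (η n)
  mκ : ∀ n, Measurable (κ n)
  nn : ∀ n ω, 0 ≤ κ n ω
  start : ∀ i, ∀ᵐ ω ∂(P i), η 0 ω = i
  path : ∀ (n : ℕ) (I : ℕ → Fin m) (T : ℕ → ℝ),
    P (I 0) {ω | ∀ k ≤ n, (η k ω = I k ∧ (1 ≤ k → κ k ω ≤ T k))}
      = ∏ k ∈ Finset.range n, nuK η κ P (I k) (I (k + 1)) (Iic (T (k + 1)))

lemma isMRP_of (η : ℕ → Ω → Fin m) (κ : ℕ → Ω → ℝ) (P : Fin m → Measure Ω)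
    (prob : ∀ i, IsProbabilityMeasure (P i))
    (mη : ∀ n, Measurable (η n))
    (mκ : ∀ n, Measurable (κ n))
    (nn : ∀ n ω, 0 ≤ κ n ω) (Q : Fin m → Fin m → ℝ → ℝ)
    (hMRP : ∀ n : ℕ, ∀ I : ℕ → Fin m, ∀ T : ℕ → ℝ,
      P (I 0) {ω | ∀ k ≤ n, (η k ω = I k ∧ (1 ≤ k → κ k ω ≤ T k))}
        = ENNReal.ofReal (∏ k ∈ Finset.Icc 1 n, Q (I (k - 1)) (I k) (T k))) :
    IsMRP η κ P := by
  have start : ∀ i, ∀ᵐ ω ∂(P i), η 0 ω = i := by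
    intro i
    have h := hMRP 0 (fun _ => i) (fun _ => 0)
    simp at h
    have := prob i
    rw [ae_iff]
    have hms : MeasurableSet {ω | η 0 ω = i} := mη 0 (measurableSet_singleton i)
    have := prob_compl_eq_zero_iff (μ := P i) hms
    exact this.2 h
  have hnu : ∀ i j t, nuK η κ P i j (Iic t) = ENNReal.ofReal (Q i j t) := by
    intro i j t
    have h := hMRP 1 (fun k => if k = 0 then i else j) (fun _ => t)
    simp at h
    rw [← h, nuK, Measure.map_apply (mκ 1) measurableSet_Iic, Measure.restrict_apply
      ((mκ 1) measurableSet_Iic)]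
    apply measure_congr
    filter_upwards [start i] with ω hω
    apply propext
    change (κ 1 ω ≤ t ∧ η 1 ω = j) ↔ ∀ k ≤ 1, (η k ω = if k = 0 then i else j) ∧ (1 ≤ k → κ k ω ≤ t)
    constructor
    · rintro ⟨h1, h2⟩ k hk
      interval_cases k
      · simp [hω]
      · simp [h1, h2]
    · intro h
      have := h 1 le_rfl
      simp at this
      exact ⟨this.2, this.1⟩
  refine ⟨prob, mη, mκ, nn, start, ?_⟩
  intro n I T
  simp_rw [hnu]
  induction n with
  | zero => simpa using hMRP 0 I T
  | succ n ih =>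
    rw [Finset.prod_range_succ, ← ih, hMRP (n+1), hMRP n]
    rw [Finset.prod_Icc_succ_top (by omega)]
    simp only [Nat.add_sub_cancel]
    by_cases h0 : 0 ≤ ∏ k ∈ Finset.Icc 1 n, Q (I (k - 1)) (I k) (T k)
    · rw [ENNReal.ofReal_mul h0]
    · have hz : P (I 0) {ω | ∀ k ≤ n, (η k ω = I k ∧ (1 ≤ k → κ k ω ≤ T k))} = 0 := by
        rw [hMRP n, ENNReal.ofReal_eq_zero]
        exact le_of_not_ge h0
      have hz2 : P (I 0) {ω | ∀ k ≤ n + 1, (η k ω = I k ∧ (1 ≤ k → κ k ω ≤ T k))} = 0 := by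
        apply measure_mono_null _ hz
        intro ω h k hk
        exact h k (by omega)
      rw [hMRP (n+1), Finset.prod_Icc_succ_top (by omega)] at hz2
      simp only [Nat.add_sub_cancel] at hz2
      rw [hz2, ← hMRP n, hz, zero_mul]

lemma lintegral_fin_prod {n : ℕ} (μ : Fin n → Measure ℝ) [∀ i, IsFiniteMeasure (μ i)]
    (f : Fin n → ℝ → ℝ≥0∞) (hf : ∀ i, Measurable (f i)) :
    ∫⁻ x : Fin n → ℝ, ∏ i, f i (x i) ∂(Measure.pi μ) = ∏ i, ∫⁻ x, f i x ∂(μ i) := by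
  induction n with
  | zero => simp
  | succ n ih =>
    have hm : Measurable fun x : Fin (n+1) → ℝ => ∏ i, f i (x i) := by fun_prop
    rw [← ((measurePreserving_piFinSuccAbove μ 0).symm).lintegral_comp hm]
    simp_rw [MeasurableEquiv.piFinSuccAbove_symm_apply, Fin.insertNthEquiv,
            Fin.prod_univ_succ, Fin.insertNth_zero, Equiv.coe_fn_mk, Fin.cons_succ,
            Fin.zero_succAbove, Fin.cons_zero, cast_eq]
    rw [← ih (fun i => μ i.succ) (fun i => f i.succ) (fun i => hf _)]
    rw [← lintegral_prod_mul (hf 0).aemeasurable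
      (Finset.measurable_fun_prod _ (fun i _ => (hf i.succ).comp (measurable_pi_apply i))).aemeasurable]

variable {η : ℕ → Ω → Fin m} {κ : ℕ → Ω → ℝ} {P : Fin m → Measure Ω}

lemma measSet_path (H : IsMRP η κ P) (n : ℕ) (I : ℕ → Fin m) :
    MeasurableSet {ω | ∀ k ≤ n, η k ω = I k} := by
  have : {ω | ∀ k ≤ n, η k ω = I k} = ⋂ k ∈ Set.Iic n, (η k) ⁻¹' {I k} := by
    ext ω; simp
  rw [this]
  exact MeasurableSet.biInter (Set.to_countable _) (fun k _ => H.mη k (measurableSet_singleton _))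

lemma nuK_finite (H : IsMRP η κ P) (i j : Fin m) : IsFiniteMeasure (nuK η κ P i j) := by
  have := H.prob i
  unfold nuK
  infer_instance

lemma path_lintegral (H : IsMRP η κ P) (n : ℕ) (I : ℕ → Fin m) (h : ℕ → ℝ → ℝ≥0∞)
    (hh : ∀ k, Measurable (h k)) :
    ∫⁻ ω in {ω | ∀ k ≤ n, η k ω = I k}, ∏ k ∈ Finset.range n, h k (κ (k + 1) ω) ∂(P (I 0))
      = ∏ k ∈ Finset.range n, ∫⁻ x, h k x ∂(nuK η κ P (I k) (I (k + 1))) := by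
  have := H.prob (I 0)
  have : ∀ i j, IsFiniteMeasure (nuK η κ P i j) := nuK_finite H
  have hmX : Measurable (fun ω => (fun k : Fin n => κ (k + 1) ω)) :=
    measurable_pi_lambda _ (fun k => H.mκ _)
  have key : Measure.pi (fun k : Fin n => nuK η κ P (I k) (I (k + 1)))
      = ((P (I 0)).restrict {ω | ∀ k ≤ n, η k ω = I k}).map
          (fun ω => (fun k : Fin n => κ (k + 1) ω)) := by
    apply Measure.pi_eq_generateFrom (C := fun _ => range Iic)
    · intro i; exact (borel_eq_generateFrom_Iic ℝ).symm.trans (BorelSpace.measurable_eq).symm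
    · intro i; exact isPiSystem_Iic
    · intro i
      refine ⟨fun q => Iic (q : ℝ), fun q => ⟨_, rfl⟩, fun q => measure_lt_top _ _, ?_⟩
      exact iUnion_eq_univ_iff.2 (fun x => (exists_nat_ge x))
    · intro s hs
      choose T hT using hs
      have hs : s = fun k => Iic (T k) := by funext k; exact (hT k).symm
      subst hs
      let T' : ℕ → ℝ := fun k => if hk : k - 1 < n then T ⟨k - 1, hk⟩ else 0
      have h1 := H.path n I T'
      rw [Finset.prod_range] at h1
      have h2 : ∀ k : Fin n, T' (k + 1) = T k := by
        intro k; simp [T']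
      simp_rw [h2] at h1
      rw [← h1, Measure.map_apply hmX (MeasurableSet.univ_pi fun _ => measurableSet_Iic),
        Measure.restrict_apply (hmX (MeasurableSet.univ_pi fun _ => measurableSet_Iic))]
      congr 1
      ext ω
      simp only [Set.mem_inter_iff, Set.mem_preimage, Set.mem_pi, Set.mem_univ, true_imp_iff,
        Set.mem_Iic, Set.mem_ofPred_eq]
      constructor
      · rintro ⟨ha, hb⟩ k hk
        refine ⟨hb k hk, fun hk1 => ?_⟩
        have := ha ⟨k - 1, by omega⟩
        have hlt : k - 1 < n := by omega
        have e : k - 1 + 1 = k := by omega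
        simp only [e] at this
        simp only [T', hlt, dif_pos]
        exact this
      · intro ha
        refine ⟨fun k => ?_, fun k hk => (ha k hk).1⟩
        have := (ha (k + 1) (by omega)).2 (by omega)
        rwa [h2] at this
  rw [Finset.prod_range (fun k => ∫⁻ x, h k x ∂(nuK η κ P (I k) (I (k + 1))))]
  rw [← lintegral_fin_prod (fun k : Fin n => nuK η κ P (I k) (I (k + 1))) (fun k => h k)
    (fun k => hh k), key, lintegral_map (by fun_prop) hmX]
  simp_rw [Finset.prod_range]

/-- multiplicative functional along the trajectory -/
def Mf (g : Fin m → ℕ → Fin m → ℝ → ℝ≥0∞) (η : ℕ → Ω → Fin m) (κ : ℕ → Ω → ℝ) (K : ℕ)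
    (ω : Ω) : ℝ≥0∞ :=
  ∏ k ∈ Finset.range K,
    g (η k ω) (Nat.count (fun l => η l ω = η k ω) k) (η (k + 1) ω) (κ (k + 1) ω)

lemma lintegral_decomp {α : Type} [Fintype α] [MeasurableSpace α] [MeasurableSingletonClass α]
    (μ : Measure Ω) (X : Ω → α) (hX : Measurable X) (F : Ω → ℝ≥0∞) :
    ∫⁻ ω, F ω ∂μ = ∑ a, ∫⁻ ω in {ω | X ω = a}, F ω ∂μ := by
  classical
  rw [← lintegral_biUnion_finset]
  · have : (⋃ b ∈ (Finset.univ : Finset α), {ω | X ω = b}) = univ := by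
      ext ω; simp
    rw [this, Measure.restrict_univ]
  · intro a _ b _ hab
    apply Set.disjoint_left.2
    intro ω h1 h2
    exact hab (h1.symm.trans h2)
  · intro b _
    exact hX (measurableSet_singleton b)

/-- extension of a finite path -/
def extP {K : ℕ} (J : Fin (K + 1) → Fin m) (j : Fin m) (k : ℕ) : Fin m :=
  if h : k < K + 1 then J ⟨k, h⟩ else j

lemma extP_lt {K : ℕ} (J : Fin (K + 1) → Fin m) (j j' : Fin m) (k : ℕ) (h : k ≤ K) :
    extP J j k = extP J j' k := by
  simp [extP, Nat.lt_succ_of_le h]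

lemma extP_last {K : ℕ} (J : Fin (K + 1) → Fin m) (j : Fin m) :
    extP J j (K + 1) = j := by
  simp [extP]

lemma count_congr' {p q : ℕ → Prop} [DecidablePred p] [DecidablePred q] (k : ℕ)
    (h : ∀ l < k, (p l ↔ q l)) : Nat.count p k = Nat.count q k := by
  induction k with
  | zero => simp
  | succ k ih =>
    rw [Nat.count_succ, Nat.count_succ, ih (fun l hl => h l (by omega))]
    simp [h k (by omega)]

lemma Mf_path (g : Fin m → ℕ → Fin m → ℝ → ℝ≥0∞) (K : ℕ) (I : ℕ → Fin m)
    (ω : Ω) (hω : ∀ k ≤ K, η k ω = I k) :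
    Mf g η κ K ω = ∏ k ∈ Finset.range K,
      g (I k) (Nat.count (fun l => I l = I k) k) (I (k + 1)) (κ (k + 1) ω) := by
  unfold Mf
  apply Finset.prod_congr rfl
  intro k hk
  have hk := Finset.mem_range.1 hk
  rw [hω k (by omega), hω (k+1) (by omega)]
  congr 1
  rw [count_congr' k (fun l hl => by rw [hω l (by omega)])]

lemma Mf_step (H : IsMRP η κ P) (g : Fin m → ℕ → Fin m → ℝ → ℝ≥0∞)
    (hg : ∀ i n j, Measurable (g i n j)) (i0 : Fin m) (K : ℕ) :
    ∫⁻ ω, Mf g η κ (K + 1) ω ∂(P i0) =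
      ∫⁻ ω, Mf g η κ K ω * (∑ j, ∫⁻ x, g (η K ω) (Nat.count (fun l => η l ω = η K ω) K) j x
        ∂(nuK η κ P (η K ω) j)) ∂(P i0) := by
  have hX1 : Measurable (fun ω => (fun k : Fin (K + 1) => η k ω)) :=
    measurable_pi_lambda _ (fun k => H.mη _)
  rw [lintegral_decomp (P i0) _ (hX1.prodMk (H.mη (K + 1))), lintegral_decomp (P i0) _ hX1,
    Fintype.sum_prod_type]
  apply Finset.sum_congr rfl
  intro J _
  by_cases hJ : J 0 = i0
  · have hset1 : ∀ j, {ω | ((fun k : Fin (K + 1) => η k ω), η (K + 1) ω) = (J, j)}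
        = {ω | ∀ k ≤ K + 1, η k ω = extP J j k} := by
      intro j
      ext ω
      simp only [Set.mem_ofPred_eq, Prod.mk.injEq, funext_iff]
      constructor
      · rintro ⟨h1, h2⟩ k hk
        by_cases hk' : k < K + 1
        · simpa [extP, hk'] using h1 ⟨k, hk'⟩
        · have : k = K + 1 := by omega
          subst this
          rw [extP_last, h2]
      · intro h
        refine ⟨fun k => ?_, ?_⟩
        · have := h k (by omega)
          simpa [extP, Nat.le_of_lt_succ k.2] using this
        · rw [h (K+1) le_rfl, extP_last]
    have hset2 : {ω | (fun k : Fin (K + 1) => η k ω) = J}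
        = {ω | ∀ k ≤ K, η k ω = extP J i0 k} := by
      ext ω
      simp only [Set.mem_ofPred_eq, funext_iff]
      constructor
      · intro h k hk
        simpa [extP, Nat.lt_succ_of_le hk] using h ⟨k, by omega⟩
      · intro h k
        simpa [extP, Nat.le_of_lt_succ k.2] using h k (by omega)
    have h0 : ∀ j, extP J j 0 = i0 := by intro j; simpa [extP] using hJ
    rw [hset2]
    simp_rw [hset1]
    have hL : ∀ j, ∫⁻ ω in {ω | ∀ k ≤ K + 1, η k ω = extP J j k}, Mf g η κ (K + 1) ω ∂(P i0)
        = (∏ k ∈ Finset.range K, ∫⁻ x, g (extP J i0 k)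
            (Nat.count (fun l => extP J i0 l = extP J i0 k) k) (extP J i0 (k + 1)) x
            ∂(nuK η κ P (extP J i0 k) (extP J i0 (k + 1))))
          * ∫⁻ x, g (extP J i0 K) (Nat.count (fun l => extP J i0 l = extP J i0 K) K) j x
            ∂(nuK η κ P (extP J i0 K) j) := by
      intro j
      have h1 := path_lintegral H (K + 1) (extP J j)
        (fun k => g (extP J j k) (Nat.count (fun l => extP J j l = extP J j k) k)
          (extP J j (k + 1))) (fun k => hg _ _ _)
      rw [h0 j] at h1
      rw [setLIntegral_congr_fun (measSet_path H (K + 1) _)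
        (fun ω hω => Mf_path g (K + 1) (extP J j) ω hω), h1, Finset.prod_range_succ, extP_last]
      congr 1
      · apply Finset.prod_congr rfl
        intro k hk
        have hk := Finset.mem_range.1 hk
        rw [extP_lt J j i0 k (by omega), extP_lt J j i0 (k+1) (by omega)]
        rw [count_congr' k (fun l hl => by rw [extP_lt J j i0 l (by omega)])]
      · rw [extP_lt J j i0 K le_rfl]
        rw [count_congr' K (fun l hl => by rw [extP_lt J j i0 l (by omega)])]
    simp_rw [hL]
    rw [← Finset.mul_sum]
    have h1 := path_lintegral H K (extP J i0)
        (fun k => g (extP J i0 k) (Nat.count (fun l => extP J i0 l = extP J i0 k) k)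
          (extP J i0 (k + 1))) (fun k => hg _ _ _)
    rw [h0 i0] at h1
    rw [← h1, ← lintegral_mul_const]
    · apply setLIntegral_congr_fun (measSet_path H K _)
      intro ω hω
      have hω : ∀ k ≤ K, η k ω = extP J i0 k := hω
      dsimp only
      rw [Mf_path g K (extP J i0) ω hω, hω K le_rfl]
      rw [count_congr' (p := fun l => η l ω = extP J i0 K) (q := fun l => extP J i0 l = extP J i0 K)
        K (fun l hl => by rw [hω l (by omega)])]
    · exact Finset.measurable_fun_prod _ (fun k _ => (hg _ _ _).comp (H.mκ _))
  · have hz : P i0 {ω | (fun k : Fin (K + 1) => η k ω) = J} = 0 := by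
      have := H.start i0
      rw [ae_iff] at this
      apply measure_mono_null _ this
      intro ω hω
      have hω : (fun k : Fin (K + 1) => η k ω) = J := hω
      have h2 := congrFun hω 0
      simp at h2
      change ¬ (η 0 ω = i0)
      rw [h2]; exact hJ
    rw [setLIntegral_measure_zero _ _ hz]
    apply Finset.sum_eq_zero
    intro j _
    apply setLIntegral_measure_zero
    apply measure_mono_null _ hz
    intro ω hω
    exact congrArg Prod.fst hω

lemma Mf_le_one (H : IsMRP η κ P) (g : Fin m → ℕ → Fin m → ℝ → ℝ≥0∞)
    (hg : ∀ i n j, Measurable (g i n j)) 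
    (hc : ∀ i n, ∑ j, ∫⁻ x, g i n j x ∂(nuK η κ P i j) ≤ 1) (i0 : Fin m) (K : ℕ) :
    ∫⁻ ω, Mf g η κ K ω ∂(P i0) ≤ 1 := by
  have := H.prob i0
  induction K with
  | zero => simp [Mf]
  | succ K ih =>
    rw [Mf_step H g hg]
    refine le_trans (lintegral_mono fun ω => ?_) ih
    exact mul_le_of_le_one_right' (hc _ _)

lemma Mf_eq_one (H : IsMRP η κ P) (g : Fin m → ℕ → Fin m → ℝ → ℝ≥0∞)
    (hg : ∀ i n j, Measurable (g i n j)) 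
    (hc : ∀ i n, ∑ j, ∫⁻ x, g i n j x ∂(nuK η κ P i j) = 1) (i0 : Fin m) (K : ℕ) :
    ∫⁻ ω, Mf g η κ K ω ∂(P i0) = 1 := by
  have := H.prob i0
  induction K with
  | zero => simp [Mf]
  | succ K ih =>
    rw [Mf_step H g hg]
    simp_rw [hc, mul_one]
    exact ih

lemma sum_nuK (H : IsMRP η κ P) (i : Fin m) (f : Fin m → ℝ → ℝ≥0∞) (hf : ∀ j, Measurable (f j)) :
    ∑ j, ∫⁻ x, f j x ∂(nuK η κ P i j) = ∫⁻ ω, f (η 1 ω) (κ 1 ω) ∂(P i) := by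
  rw [lintegral_decomp (P i) (η 1) (H.mη 1)]
  apply Finset.sum_congr rfl
  intro j _
  rw [nuK, lintegral_map (hf j) (H.mκ 1)]
  apply setLIntegral_congr_fun (H.mη 1 (measurableSet_singleton j))
  intro ω hω
  have hω : η 1 ω = j := hω
  simp only [hω]

lemma tendsto_count {p : ℕ → Prop} [DecidablePred p] (h : (Set.ofPred p).Infinite) :
    Tendsto (Nat.count p) atTop atTop :=
  tendsto_atTop_atTop_of_monotone (Nat.count_monotone p)
    (fun b => ⟨Nat.nth p b, (Nat.count_nth_of_infinite h b).ge⟩)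

lemma measurable_cnt (H : IsMRP η κ P) (K k : ℕ) :
    Measurable (fun ω => Nat.count (fun l => η l ω = η K ω) k) := by
  induction k with
  | zero => simp
  | succ k ih =>
    simp_rw [Nat.count_succ]
    exact ih.add (Measurable.ite (measurableSet_eq_fun (H.mη k) (H.mη K))
      measurable_const measurable_const)

lemma measurable_Mf (H : IsMRP η κ P) (g : Fin m → ℕ → Fin m → ℝ → ℝ≥0∞)
    (hg : ∀ i n j, Measurable (g i n j)) (K : ℕ) : Measurable (Mf g η κ K) := by
  unfold Mf
  apply Finset.measurable_fun_prod
  intro k _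
  have h1 : Measurable (fun y : ℝ × (Fin m × ℕ × Fin m) => g y.2.1 y.2.2.1 y.2.2.2 y.1) :=
    measurable_from_prod_countable_left (fun y => hg y.1 y.2.1 y.2.2)
  exact h1.comp ((H.mκ (k+1)).prodMk ((H.mη k).prodMk ((measurable_cnt H k k).prodMk (H.mη (k+1)))))

lemma io_step_aux (H : IsMRP η κ P) (a b : Fin m) (hab : P a {ω | η 1 ω = b} ≠ 0) (i0 : Fin m)
    (n0 : ℕ) : ∀ᵐ ω ∂(P i0), (∃ᶠ k in atTop, η k ω = a) →
      ∃ k, η k ω = a ∧ n0 ≤ Nat.count (fun l => η l ω = a) k ∧ η (k + 1) ω = b := by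
  have := H.prob i0
  have := H.prob a
  set p := P a {ω | η 1 ω = b} with hp
  let g : Fin m → ℕ → Fin m → ℝ → ℝ≥0∞ := fun i n j _ =>
    if i = a ∧ n0 ≤ n then (if j = b then 0 else 1 + p) else 1
  have hg : ∀ i n j, Measurable (g i n j) := fun i n j => measurable_const
  have hc : ∀ i n, ∑ j, ∫⁻ x, g i n j x ∂(nuK η κ P i j) ≤ 1 := by
    intro i n
    have := H.prob i
    rw [sum_nuK H i (g i n) (hg i n)]
    by_cases h : i = a ∧ n0 ≤ n
    · have hms : MeasurableSet {ω | η 1 ω = b} := H.mη 1 (measurableSet_singleton b)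
      have e : ∀ ω, g i n (η 1 ω) (κ 1 ω)
          = ({ω | η 1 ω = b}ᶜ).indicator (fun _ => 1 + p) ω := by
        intro ω
        simp only [g, h, and_self, if_true, Set.indicator, Set.mem_compl_iff, Set.mem_ofPred_eq]
        by_cases h' : η 1 ω = b <;> simp [h']
      simp_rw [e]
      rw [lintegral_indicator hms.compl, setLIntegral_const, h.1]
      have h1 : p + P a {ω | η 1 ω = b}ᶜ = 1 := by
        rw [hp, measure_add_measure_compl hms, measure_univ]
      calc (1 + p) * P a {ω | η 1 ω = b}ᶜ = P a {ω | η 1 ω = b}ᶜ + p * P a {ω | η 1 ω = b}ᶜ := by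
            ring
        _ ≤ P a {ω | η 1 ω = b}ᶜ + p * 1 := by gcongr; exact prob_le_one
        _ = 1 := by rw [mul_one, add_comm, h1]
    · simp [g, h]
  have hfin : ∫⁻ ω, liminf (fun K => Mf g η κ K ω) atTop ∂(P i0) ≤ 1 := by
    refine (lintegral_liminf_le (fun K => measurable_Mf H g hg K)).trans ?_
    refine (liminf_le_liminf (Eventually.of_forall (fun K => Mf_le_one H g hg hc i0 K))).trans ?_
    simp
  have hae := ae_lt_top (Measurable.liminf (fun K => measurable_Mf H g hg K))
    (hfin.trans_lt ENNReal.one_lt_top).ne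
  filter_upwards [hae] with ω hω hio
  by_contra hcon
  push Not at hcon
  have hinf : (Set.ofPred (fun l => η l ω = a)).Infinite := Nat.frequently_atTop_iff_infinite.1 hio
  have hlow : ∀ K, (1 + p) ^ (Nat.count (fun l => η l ω = a) K - n0) ≤ Mf g η κ K ω := by
    intro K
    induction K with
    | zero => simp [Mf]
    | succ K ih =>
      rw [Nat.count_succ]
      have hs : Mf g η κ (K + 1) ω = Mf g η κ K ω * g (η K ω)
          (Nat.count (fun l => η l ω = η K ω) K) (η (K + 1) ω) (κ (K + 1) ω) := by
        simp [Mf, Finset.prod_range_succ]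
      rw [hs]
      by_cases hK : η K ω = a
      · rw [hK]
        by_cases hn : n0 ≤ Nat.count (fun l => η l ω = a) K
        · have hb := hcon K hK hn
          simp only [g, hn, and_self, if_true, hb, if_false]
          rw [show Nat.count (fun l => η l ω = a) K + 1 - n0
            = (Nat.count (fun l => η l ω = a) K - n0) + 1 by omega, pow_succ]
          gcongr
        · have : Nat.count (fun l => η l ω = a) K + 1 - n0 = 0 := by omega
          simp only [g, hn, and_false, if_false, mul_one, if_true, this, pow_zero]
          refine le_trans ?_ ih
          exact one_le_pow₀ (by simp)
      · simp only [g, hK, false_and, if_false, mul_one, add_zero]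
        exact ih
  have ht : Tendsto (fun K => Mf g η κ K ω) atTop (𝓝 ⊤) := by
    have h1 : Tendsto (fun n : ℕ => (1 + p) ^ n) atTop (𝓝 ⊤) :=
      ENNReal.tendsto_pow_atTop_nhds_top_iff.2
        (ENNReal.lt_add_right ENNReal.one_ne_top hab)
    have h2 := h1.comp ((tendsto_sub_atTop_nat n0).comp (tendsto_count hinf))
    exact tendsto_of_tendsto_of_tendsto_of_le_of_le h2 tendsto_const_nhds hlow (fun _ => le_top)
  rw [ht.liminf_eq] at hω
  exact lt_irrefl _ hω

lemma io_step (H : IsMRP η κ P) (a b : Fin m) (hab : P a {ω | η 1 ω = b} ≠ 0) (i0 : Fin m) :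
    ∀ᵐ ω ∂(P i0), (∃ᶠ k in atTop, η k ω = a) → (∃ᶠ k in atTop, η k ω = b) := by
  filter_upwards [ae_all_iff.2 (io_step_aux H a b hab i0)] with ω hω hio
  rw [frequently_atTop]
  intro n0
  obtain ⟨k, _, h2, h3⟩ := hω n0 hio
  exact ⟨k + 1, by have := Nat.count_le (p := fun l => η l ω = a) (n := k); omega, h3⟩

lemma ring_prop (N : ℕ) (c : ℕ → Fin m) (hcN : c N = c 0)
    (hall : ∀ i : Fin m, ∃ k ≤ N, c k = i) (V : Fin m → Prop)
    (hV : ∀ k < N, V (c k) → V (c (k + 1))) (i : Fin m) (hi : V i) : ∀ j, V j := by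
  have up : ∀ k0 d, k0 + d ≤ N → V (c k0) → V (c (k0 + d)) := by
    intro k0 d
    induction d with
    | zero => intro _ h; exact h
    | succ d ih => intro hd h; exact hV (k0 + d) (by omega) (ih (by omega) h)
  obtain ⟨k0, hk0, rfl⟩ := hall i
  have h0 : V (c 0) := by
    have := up k0 (N - k0) (by omega) hi
    rwa [show k0 + (N - k0) = N by omega, hcN] at this
  intro j
  obtain ⟨k, hk, rfl⟩ := hall j
  have := up 0 k (by omega) h0
  rwa [zero_add] at this

lemma recurrent (H : IsMRP η κ P) (N : ℕ) (c : ℕ → Fin m) (hcN : c N = c 0)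
    (hall : ∀ i : Fin m, ∃ k ≤ N, c k = i)
    (hpos : ∀ k < N, P (c k) {ω | η 1 ω = c (k + 1)} ≠ 0) (i0 : Fin m) :
    ∀ᵐ ω ∂(P i0), ∀ i, ∃ᶠ k in atTop, η k ω = i := by
  have h1 : ∀ᵐ ω ∂(P i0), ∀ k, k < N → (∃ᶠ l in atTop, η l ω = c k) →
      (∃ᶠ l in atTop, η l ω = c (k + 1)) := by
    rw [ae_all_iff]
    intro k
    by_cases hk : k < N
    · filter_upwards [io_step H _ _ (hpos k hk) i0] with ω h _ using h
    · exact Eventually.of_forall (fun ω h => absurd h hk)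
  filter_upwards [h1] with ω hω
  obtain ⟨i, hi⟩ : ∃ i, ∃ᶠ l in atTop, η l ω = i := by
    by_contra hcon
    push Not at hcon
    have := Filter.eventually_all.2 hcon
    obtain ⟨l, hl⟩ := this.exists
    exact hl _ rfl
  exact ring_prop N c hcN hall (fun i => ∃ᶠ l in atTop, η l ω = i) hω i hi

lemma prod_traj {M : Type} [CommMonoid M] (e : ℕ → Fin m) (F : Fin m → ℕ → ℕ → M) (K : ℕ) :
    ∏ k ∈ Finset.range K, F (e k) (Nat.count (fun l => e l = e k) k) k
      = ∏ i, ∏ n ∈ Finset.range (Nat.count (fun l => e l = i) K), F i n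
          (Nat.nth (fun l => e l = i) n) := by
  induction K with
  | zero => simp
  | succ K ih =>
    rw [Finset.prod_range_succ, ih]
    have h1 : ∀ i, ∏ n ∈ Finset.range (Nat.count (fun l => e l = i) (K + 1)), F i n
          (Nat.nth (fun l => e l = i) n)
        = (∏ n ∈ Finset.range (Nat.count (fun l => e l = i) K), F i n
          (Nat.nth (fun l => e l = i) n)) *
          (if e K = i then F i (Nat.count (fun l => e l = i) K) K else 1) := by
      intro i
      rw [Nat.count_succ]
      split_ifs with h
      · rw [Finset.prod_range_succ, Nat.nth_count (p := fun l => e l = i) h]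
      · simp
    simp_rw [h1]
    rw [Finset.prod_mul_distrib]
    congr 1
    simp

lemma hitTimes_eq (e : ℕ → Fin m) (i : Fin m) (h : (Set.ofPred (fun l => e l = i)).Infinite)
    (n : ℕ) : hitTimes e i n = Nat.nth (fun l => e l = i) n := by
  induction n with
  | zero => rw [hitTimes, Nat.nth_zero]
  | succ n ih =>
    rw [hitTimes, ih, Nat.nth_eq_sInf _ (n + 1)]
    congr 1
    ext x
    simp only [Set.mem_ofPred_eq]
    constructor
    · rintro ⟨h1, h2⟩
      refine ⟨h2, fun k hk => lt_of_le_of_lt ?_ h1⟩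
      exact Nat.nth_monotone h (by omega)
    · rintro ⟨h1, h2⟩
      exact ⟨h2 n (by omega), h1⟩

lemma phi_int (H : IsMRP η κ P) (i : Fin m) (s : ℝ) (hs : 0 ≤ s) (k : ℕ) :
    Integrable (fun ω => Real.exp (-(s * κ k ω))) (P i) := by
  have := H.prob i
  refine Integrable.of_bound (C := 1) ?_ ?_
  · have := H.mκ k
    exact (by fun_prop : Measurable fun ω => Real.exp (-(s * κ k ω))).aestronglyMeasurable
  · refine Eventually.of_forall fun ω => ?_
    rw [Real.norm_of_nonneg (Real.exp_pos _).le, Real.exp_le_one_iff]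
    have := mul_nonneg hs (H.nn k ω)
    linarith

lemma phi_pos (H : IsMRP η κ P) (i : Fin m) (s : ℝ) (hs : 0 ≤ s) :
    0 < ∫ ω, Real.exp (-(s * κ 1 ω)) ∂(P i) := by
  have := H.prob i
  exact integral_exp_pos (phi_int H i s hs 1)

lemma phi_le (H : IsMRP η κ P) (i : Fin m) (s : ℝ) (hs : 0 ≤ s) :
    ∫ ω, Real.exp (-(s * κ 1 ω)) ∂(P i) ≤ 1 := by
  have := H.prob i
  calc _ ≤ ∫ ω, (1 : ℝ) ∂(P i) := by
        apply integral_mono (phi_int H i s hs 1) (integrable_const _)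
        intro ω
        have := mul_nonneg hs (H.nn 1 ω)
        simp only [Real.exp_le_one_iff]
        linarith
    _ = 1 := by simp

lemma prod_formula (H : IsMRP η κ P)
    (hrec : ∀ i0, ∀ᵐ ω ∂(P i0), ∀ i, ∃ᶠ k in atTop, η k ω = i)
    (s0 : Fin m → ℕ → ℝ) (hs0 : ∀ i n, 0 ≤ s0 i n) (N : Fin m → ℕ) (i0 : Fin m) :
    AEMeasurable (fun ω => Real.exp (-(∑ i, ∑ n ∈ Finset.range (N i),
      s0 i n * kHit η κ i n ω))) (P i0) ∧
    ∫ ω, Real.exp (-(∑ i, ∑ n ∈ Finset.range (N i), s0 i n * kHit η κ i n ω)) ∂(P i0)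
      = ∏ i, ∏ n ∈ Finset.range (N i), ∫ ω, Real.exp (-(s0 i n * κ 1 ω)) ∂(P i) := by
  have := H.prob i0
  let s : Fin m → ℕ → ℝ := fun i n => if n < N i then s0 i n else 0
  have hs : ∀ i n, 0 ≤ s i n := by
    intro i n; simp only [s]; split_ifs
    · exact hs0 i n
    · exact le_rfl
  let φ : Fin m → ℕ → ℝ := fun i n => ∫ ω, Real.exp (-(s i n * κ 1 ω)) ∂(P i)
  have hφ : ∀ i n, 0 < φ i n := fun i n => phi_pos H i _ (hs i n)
  have hφ1 : ∀ i n, φ i n ≤ 1 := fun i n => phi_le H i _ (hs i n)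
  have hφN : ∀ i n, N i ≤ n → φ i n = 1 := by
    intro i n h
    have := H.prob i
    simp [φ, s, not_lt.2 h]
  let f : Fin m → ℕ → ℝ → ℝ := fun i n x => Real.exp (-(s i n * x)) / φ i n
  have hf0 : ∀ i n x, 0 ≤ f i n x := fun i n x => by
    have := hφ i n
    positivity
  have hfN : ∀ i n x, N i ≤ n → f i n x = 1 := by
    intro i n x h
    simp [f, hφN i n h, s, not_lt.2 h]
  let g : Fin m → ℕ → Fin m → ℝ → ℝ≥0∞ := fun i n _ x => ENNReal.ofReal (f i n x)
  have hg : ∀ i n j, Measurable (g i n j) := by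
    intro i n j
    simp only [g, f]
    fun_prop
  have hc : ∀ i n, ∑ j, ∫⁻ x, g i n j x ∂(nuK η κ P i j) = 1 := by
    intro i n
    rw [sum_nuK H i (g i n) (hg i n)]
    simp only [g, f]
    rw [← ofReal_integral_eq_lintegral_ofReal ((phi_int H i _ (hs i n) 1).div_const _)
      (Eventually.of_forall fun ω => hf0 i n _), integral_div]
    change ENNReal.ofReal (φ i n / φ i n) = 1
    rw [div_self (hφ i n).ne', ENNReal.ofReal_one]
  have hM : ∀ K, ∫⁻ ω, Mf g η κ K ω ∂(P i0) = 1 := fun K => Mf_eq_one H g hg hc i0 K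
  -- representation of the functional
  have hrep : ∀ K ω, Mf g η κ K ω = ∏ i, ∏ n ∈ Finset.range
      (Nat.count (fun l => η l ω = i) K),
        ENNReal.ofReal (f i n (κ (Nat.nth (fun l => η l ω = i) n + 1) ω)) := by
    intro K ω
    exact prod_traj (fun k => η k ω) (fun i n k => ENNReal.ofReal (f i n (κ (k + 1) ω))) K
  have hsub : ∀ (i : Fin m) (L : ℕ) (x : ℕ → ℝ), N i ≤ L →
      ∏ n ∈ Finset.range L, ENNReal.ofReal (f i n (x n))
        = ∏ n ∈ Finset.range (N i), ENNReal.ofReal (f i n (x n)) := by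
    intro i L x hL
    symm
    apply Finset.prod_subset (Finset.range_mono hL)
    intro n _ hn
    rw [hfN i n _ (by simpa using hn), ENNReal.ofReal_one]
  -- the bound
  have hb : ∀ (i : Fin m) (L : ℕ) (x : ℕ → ℝ), (∀ n, 0 ≤ x n) →
      ∏ n ∈ Finset.range L, ENNReal.ofReal (f i n (x n))
        ≤ ∏ n ∈ Finset.range (N i), ENNReal.ofReal (1 / φ i n) := by
    intro i L x hx
    calc ∏ n ∈ Finset.range L, ENNReal.ofReal (f i n (x n))
        ≤ ∏ n ∈ Finset.range L, ENNReal.ofReal (1 / φ i n) := by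
          apply Finset.prod_le_prod'
          intro n _
          apply ENNReal.ofReal_le_ofReal
          simp only [f]
          have := hφ i n
          gcongr
          rw [Real.exp_le_one_iff]
          have := mul_nonneg (hs i n) (hx n)
          linarith
      _ ≤ ∏ n ∈ Finset.range (max L (N i)), ENNReal.ofReal (1 / φ i n) := by
          apply Finset.prod_le_prod_of_subset_of_one_le' (Finset.range_mono (le_max_left _ _))
          intro n _ _
          rw [ENNReal.one_le_ofReal]
          exact (one_le_div (hφ i n)).2 (hφ1 i n)
      _ = _ := by
          symm
          apply Finset.prod_subset (Finset.range_mono (le_max_right _ _))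
          intro n _ hn
          rw [hφN i n (by simpa using hn)]; simp
  have haelim : ∀ᵐ ω ∂(P i0), Tendsto (fun K => Mf g η κ K ω) atTop
      (𝓝 (∏ i, ∏ n ∈ Finset.range (N i), ENNReal.ofReal (f i n (kHit η κ i n ω)))) := by
    filter_upwards [hrec i0] with ω hω
    have hinf : ∀ i, (Set.ofPred (fun l => η l ω = i)).Infinite :=
      fun i => Nat.frequently_atTop_iff_infinite.1 (hω i)
    apply tendsto_const_nhds.congr'
    have : ∀ᶠ K in atTop, ∀ i, N i ≤ Nat.count (fun l => η l ω = i) K :=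
      Filter.eventually_all.2 (fun i => (tendsto_count (hinf i)).eventually_ge_atTop _)
    filter_upwards [this] with K hK
    rw [hrep]
    apply Finset.prod_congr rfl
    intro i _
    rw [hsub i _ (fun n => κ (Nat.nth (fun l => η l ω = i) n + 1) ω) (hK i)]
    apply Finset.prod_congr rfl
    intro n _
    rw [kHit, hitTimes_eq _ _ (hinf i)]
  have hlim := tendsto_lintegral_of_dominated_convergence (μ := P i0) (F := fun K => Mf g η κ K)
    (f := fun ω => ∏ i, ∏ n ∈ Finset.range (N i), ENNReal.ofReal (f i n (kHit η κ i n ω)))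
    (fun _ => ∏ i, ∏ n ∈ Finset.range (N i), ENNReal.ofReal (1 / φ i n))
    (fun K => measurable_Mf H g hg K)
    (fun K => Eventually.of_forall (fun ω => by
      rw [hrep]
      apply Finset.prod_le_prod'
      intro i _
      exact hb i _ (fun n => κ (Nat.nth (fun l => η l ω = i) n + 1) ω) (fun n => H.nn _ _)))
    (by
      rw [lintegral_const, measure_univ, mul_one]
      exact (ENNReal.prod_lt_top (fun i _ => ENNReal.prod_lt_top
        (fun n _ => ENNReal.ofReal_lt_top))).ne)
    haelim
  simp_rw [hM] at hlim
  have hone := tendsto_nhds_unique hlim tendsto_const_nhds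
  have hsN : ∀ i, ∀ n ∈ Finset.range (N i), s i n = s0 i n := by
    intro i n hn
    simp [s, Finset.mem_range.1 hn]
  have hΦ : (∏ i, ∏ n ∈ Finset.range (N i), ∫ ω, Real.exp (-(s0 i n * κ 1 ω)) ∂(P i))
      = ∏ i, ∏ n ∈ Finset.range (N i), φ i n := by
    apply Finset.prod_congr rfl; intro i _
    apply Finset.prod_congr rfl; intro n hn
    simp only [φ, hsN i n hn]
  have hpt : ∀ ω, ∏ i, ∏ n ∈ Finset.range (N i), ENNReal.ofReal (f i n (kHit η κ i n ω))
      = ENNReal.ofReal (Real.exp (-(∑ i, ∑ n ∈ Finset.range (N i), s0 i n * kHit η κ i n ω))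
          / ∏ i, ∏ n ∈ Finset.range (N i), φ i n) := by
    intro ω
    simp_rw [← ENNReal.ofReal_prod_of_nonneg (fun n _ => hf0 _ n _)]
    rw [← ENNReal.ofReal_prod_of_nonneg (fun i _ => Finset.prod_nonneg (fun n _ => hf0 i n _))]
    congr 1
    rw [← Finset.sum_neg_distrib, Real.exp_sum, ← Finset.prod_div_distrib]
    apply Finset.prod_congr rfl; intro i _
    rw [← Finset.sum_neg_distrib, Real.exp_sum, ← Finset.prod_div_distrib]
    apply Finset.prod_congr rfl; intro n hn
    simp only [f, hsN i n hn]
  have hΦpos : 0 < ∏ i, ∏ n ∈ Finset.range (N i), φ i n :=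
    Finset.prod_pos (fun i _ => Finset.prod_pos (fun n _ => hφ i n))
  simp_rw [hpt] at hone
  have hae : AEStronglyMeasurable (fun ω => Real.exp (-(∑ i, ∑ n ∈ Finset.range (N i),
      s0 i n * kHit η κ i n ω)) / (∏ i, ∏ n ∈ Finset.range (N i), φ i n)) (P i0) := by
    have hmeas : AEMeasurable (fun ω => ∏ i, ∏ n ∈ Finset.range (N i),
        ENNReal.ofReal (f i n (kHit η κ i n ω))) (P i0) := by
      apply aemeasurable_of_tendsto_metrizable_ae (u := atTop) (f := fun K => Mf g η κ K)
        (fun K => (measurable_Mf H g hg K).aemeasurable)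
      exact haelim
    simp_rw [hpt] at hmeas
    have := hmeas.ennreal_toReal.aestronglyMeasurable
    refine this.congr (Eventually.of_forall fun ω => ?_)
    exact ENNReal.toReal_ofReal (by positivity)
  rw [hΦ]
  refine ⟨?_, ?_⟩
  · have := hae.aemeasurable.mul_const (∏ i, ∏ n ∈ Finset.range (N i), φ i n)
    refine this.congr (Eventually.of_forall fun ω => ?_)
    exact div_mul_cancel₀ _ hΦpos.ne'
  have h2 : ∫ ω, Real.exp (-(∑ i, ∑ n ∈ Finset.range (N i), s0 i n * kHit η κ i n ω))
          / (∏ i, ∏ n ∈ Finset.range (N i), φ i n) ∂(P i0) = 1 := by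
    rw [integral_eq_lintegral_of_nonneg_ae, hone]
    · simp
    · exact Eventually.of_forall fun ω => by positivity
    · exact hae
  rw [integral_div, div_eq_one_iff_eq hΦpos.ne'] at h2
  exact h2

end MRP

section Analytic

lemma sandwich {m : ℕ} (u : Fin m → ℝ) (n : Fin m → ℕ) (U : ℝ) (hU : U < 1)
    (h0 : ∀ i, 0 ≤ u i) (h1 : ∀ i, u i ≤ U) :
    Real.exp (-((∑ i, (n i : ℝ) * u i) / (1 - U))) ≤ ∏ i, (1 - u i) ^ n i ∧
    ∏ i, (1 - u i) ^ n i ≤ Real.exp (-(∑ i, (n i : ℝ) * u i)) := by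
  constructor
  · rw [Finset.sum_div, ← Finset.sum_neg_distrib, Real.exp_sum]
    apply Finset.prod_le_prod (fun i _ => (Real.exp_pos _).le)
    intro i _
    have hp : 0 < 1 - u i := by linarith [h1 i]
    have hpU : 0 < 1 - U := by linarith
    have h2 : Real.exp (-(u i / (1 - U))) ≤ 1 - u i := by
      rw [← Real.le_log_iff_exp_le hp]
      refine le_trans ?_ (Real.one_sub_inv_le_log_of_pos hp)
      have e : 1 - (1 - u i)⁻¹ = -(u i / (1 - u i)) := by field_simp; ring
      rw [e, neg_le_neg_iff]
      exact div_le_div_of_nonneg_left (h0 i) hpU (by linarith [h1 i])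
    calc Real.exp (-((n i : ℝ) * u i / (1 - U))) = Real.exp (-(u i / (1 - U))) ^ n i := by
          rw [← Real.exp_nat_mul]; congr 1; ring
      _ ≤ _ := by gcongr
  · rw [← Finset.sum_neg_distrib, Real.exp_sum]
    apply Finset.prod_le_prod (fun i _ => pow_nonneg (by linarith [h1 i]) _)
    intro i _
    have h2 : 1 - u i ≤ Real.exp (-(u i)) := by linarith [Real.add_one_le_exp (-(u i))]
    calc (1 - u i) ^ n i ≤ Real.exp (-(u i)) ^ n i := by
          have : 0 ≤ 1 - u i := by linarith [h1 i]
          gcongr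
      _ = _ := by rw [← Real.exp_nat_mul]; congr 1; ring

variable {m : ℕ} {l : Filter ℝ}

lemma fwd (π u : ℝ → Fin m → ℝ) (v : ℝ → ℝ) (c a t t' : ℝ) (hc : 0 < c) (ht' : 0 ≤ t')
    (htt : t' ≤ t) (hv : Tendsto v l atTop)
    (hπ : ∀ᶠ ε in l, ∀ i, c ≤ π ε i) (hu : ∀ᶠ ε in l, ∀ i, 0 ≤ u ε i)
    (hlim : Tendsto (fun ε => v ε * ∑ i, π ε i * u ε i) l (𝓝 a)) :
    Tendsto (fun ε => ∏ i, (1 - u ε i) ^ (Nat.floor (t * (π ε i * v ε))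
      - Nat.floor (t' * (π ε i * v ε)))) l (𝓝 (Real.exp (-(a * (t - t'))))) := by
  have hU : Tendsto (fun ε => ∑ i, u ε i) l (𝓝 0) := by
    have h1 : Tendsto (fun ε => (v ε * ∑ i, π ε i * u ε i) / (c * v ε)) l (𝓝 0) :=
      hlim.div_atTop (hv.const_mul_atTop hc)
    refine tendsto_of_tendsto_of_tendsto_of_le_of_le' tendsto_const_nhds h1 ?_ ?_
    · filter_upwards [hu] with ε h
      exact Finset.sum_nonneg (fun i _ => h i)
    · filter_upwards [hu, hπ, hv.eventually_gt_atTop 0] with ε h1 h2 h3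
      rw [le_div_iff₀ (by positivity)]
      have : c * ∑ i, u ε i ≤ ∑ i, π ε i * u ε i := by
        rw [Finset.mul_sum]
        exact Finset.sum_le_sum (fun i _ => mul_le_mul_of_nonneg_right (h2 i) (h1 i))
      nlinarith
  let S : ℝ → ℝ := fun ε => ∑ i, ((Nat.floor (t * (π ε i * v ε))
      - Nat.floor (t' * (π ε i * v ε)) : ℕ) : ℝ) * u ε i
  have hS : Tendsto S l (𝓝 (a * (t - t'))) := by
    have h1 : Tendsto (fun ε => (v ε * ∑ i, π ε i * u ε i) * (t - t') - ∑ i, u ε i) l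
        (𝓝 (a * (t - t') - 0)) := (hlim.mul_const _).sub hU
    have h2 : Tendsto (fun ε => (v ε * ∑ i, π ε i * u ε i) * (t - t') + ∑ i, u ε i) l
        (𝓝 (a * (t - t') + 0)) := (hlim.mul_const _).add hU
    rw [sub_zero] at h1
    rw [add_zero] at h2
    have key : ∀ᶠ ε in l, ∀ i, |((Nat.floor (t * (π ε i * v ε))
      - Nat.floor (t' * (π ε i * v ε)) : ℕ) : ℝ) - v ε * π ε i * (t - t')| ≤ 1 := by
      filter_upwards [hπ, hv.eventually_gt_atTop 0] with ε h2 h3 i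
      have hx : 0 ≤ π ε i * v ε := mul_nonneg (hc.le.trans (h2 i)) h3.le
      have hle : t' * (π ε i * v ε) ≤ t * (π ε i * v ε) := mul_le_mul_of_nonneg_right htt hx
      rw [Nat.cast_sub (Nat.floor_mono hle)]
      have e1 := Nat.floor_le (mul_nonneg ht' hx)
      have e2 := Nat.floor_le (mul_nonneg (ht'.trans htt) hx)
      have e3 := Nat.lt_floor_add_one (t' * (π ε i * v ε))
      have e4 := Nat.lt_floor_add_one (t * (π ε i * v ε))
      rw [abs_le]
      constructor <;> nlinarith
    refine tendsto_of_tendsto_of_tendsto_of_le_of_le' h1 h2 ?_ ?_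
    · filter_upwards [key, hu] with ε hk h1
      simp only [S]
      rw [Finset.mul_sum, Finset.sum_mul, ← Finset.sum_sub_distrib]
      apply Finset.sum_le_sum
      intro i _
      have := (abs_le.1 (hk i)).1
      nlinarith [h1 i, mul_le_mul_of_nonneg_right this (h1 i)]
    · filter_upwards [key, hu] with ε hk h1
      simp only [S]
      rw [Finset.mul_sum, Finset.sum_mul, ← Finset.sum_add_distrib]
      apply Finset.sum_le_sum
      intro i _
      have := (abs_le.1 (hk i)).2
      nlinarith [h1 i, mul_le_mul_of_nonneg_right this (h1 i)]
  have hS2 : Tendsto (fun ε => S ε / (1 - ∑ i, u ε i)) l (𝓝 (a * (t - t') / (1 - 0))) :=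
    hS.div (tendsto_const_nhds.sub hU) (by norm_num)
  rw [sub_zero, div_one] at hS2
  have hlt : ∀ᶠ ε in l, ∑ i, u ε i < 1 := hU.eventually_lt_const one_pos
  have hsw : ∀ᶠ ε in l, Real.exp (-(S ε / (1 - ∑ i, u ε i))) ≤
      (∏ i, (1 - u ε i) ^ (Nat.floor (t * (π ε i * v ε)) - Nat.floor (t' * (π ε i * v ε)))) ∧
      (∏ i, (1 - u ε i) ^ (Nat.floor (t * (π ε i * v ε)) - Nat.floor (t' * (π ε i * v ε))))
        ≤ Real.exp (-(S ε)) := by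
    filter_upwards [hlt, hu] with ε h1 h2
    exact sandwich (u ε) _ _ h1 h2
      (fun i => Finset.single_le_sum (fun i _ => h2 i) (Finset.mem_univ i))
  exact tendsto_of_tendsto_of_tendsto_of_le_of_le'
    ((Real.continuous_exp.tendsto _).comp hS2.neg) ((Real.continuous_exp.tendsto _).comp hS.neg)
    (hsw.mono fun _ h => h.1) (hsw.mono fun _ h => h.2)

lemma bwd (π u : ℝ → Fin m → ℝ) (v : ℝ → ℝ) (c L : ℝ) (hc : 0 < c) (hL : 0 < L)
    (hv : Tendsto v l atTop)
    (hπ : ∀ᶠ ε in l, ∀ i, c ≤ π ε i) (hu : ∀ᶠ ε in l, ∀ i, 0 ≤ u ε i)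
    (hu1 : ∀ᶠ ε in l, ∀ i, u ε i < 1)
    (hlim : Tendsto (fun ε => ∏ i, (1 - u ε i) ^ (Nat.floor (1 * (π ε i * v ε)))) l (𝓝 L)) :
    Tendsto (fun ε => v ε * ∑ i, π ε i * u ε i) l (𝓝 (-Real.log L)) := by
  let W : ℝ → ℝ := fun ε => -Real.log (∏ i, (1 - u ε i) ^ (Nat.floor (1 * (π ε i * v ε))))
  have hW : Tendsto W l (𝓝 (-Real.log L)) := (hlim.log hL.ne').neg
  let S : ℝ → ℝ := fun ε => ∑ i, (Nat.floor (1 * (π ε i * v ε)) : ℝ) * u ε i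
  have hSW : ∀ᶠ ε in l, S ε ≤ W ε := by
    filter_upwards [hu, hu1] with ε h0 h1
    have hpos : 0 < ∏ i, (1 - u ε i) ^ (Nat.floor (1 * (π ε i * v ε))) :=
      Finset.prod_pos (fun i _ => pow_pos (by linarith [h1 i]) _)
    simp only [S, W]
    rw [le_neg, Real.log_le_iff_le_exp hpos, ← Finset.sum_neg_distrib, Real.exp_sum]
    apply Finset.prod_le_prod (fun i _ => pow_nonneg (by linarith [h1 i]) _)
    intro i _
    have h2 : 1 - u ε i ≤ Real.exp (-(u ε i)) := by linarith [Real.add_one_le_exp (-(u ε i))]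
    calc (1 - u ε i) ^ _ ≤ Real.exp (-(u ε i)) ^ _ := by
          have : 0 ≤ 1 - u ε i := by linarith [h1 i]
          exact pow_le_pow_left₀ this h2 _
      _ = _ := by rw [← Real.exp_nat_mul]; congr 1; ring
  have hfl : ∀ᶠ ε in l, ∀ i, π ε i * v ε - 1 ≤ (Nat.floor (1 * (π ε i * v ε)) : ℝ) ∧
      (Nat.floor (1 * (π ε i * v ε)) : ℝ) ≤ π ε i * v ε := by
    filter_upwards [hπ, hv.eventually_gt_atTop 0] with ε h2 h3 i
    have hx : 0 ≤ π ε i * v ε := mul_nonneg (hc.le.trans (h2 i)) h3.le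
    rw [one_mul]
    exact ⟨by linarith [Nat.lt_floor_add_one (π ε i * v ε)], Nat.floor_le hx⟩
  have hcv : Tendsto (fun ε => c * v ε - 1) l atTop :=
    tendsto_atTop_add_const_right _ (-1) (hv.const_mul_atTop hc)
  have hU : Tendsto (fun ε => ∑ i, u ε i) l (𝓝 0) := by
    have h1 : Tendsto (fun ε => W ε / (c * v ε - 1)) l (𝓝 0) := hW.div_atTop hcv
    refine tendsto_of_tendsto_of_tendsto_of_le_of_le' tendsto_const_nhds h1 ?_ ?_
    · filter_upwards [hu] with ε h
      exact Finset.sum_nonneg (fun i _ => h i)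
    · filter_upwards [hu, hπ, hv.eventually_gt_atTop 0, hcv.eventually_gt_atTop 0, hfl, hSW]
        with ε h1 h2 h3 h4 h5 h6
      rw [le_div_iff₀ h4]
      refine le_trans ?_ h6
      simp only [S]
      rw [Finset.sum_mul]
      apply Finset.sum_le_sum
      intro i _
      rw [mul_comm]
      apply mul_le_mul_of_nonneg_right _ (h1 i)
      have := (h5 i).1
      nlinarith [h2 i]
  have hlt : ∀ᶠ ε in l, ∑ i, u ε i < 1 := hU.eventually_lt_const one_pos
  have hlow : ∀ᶠ ε in l, (1 - ∑ i, u ε i) * W ε ≤ S ε := by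
    filter_upwards [hlt, hu, hu1] with ε h1 h2 h3
    have hpos : 0 < ∏ i, (1 - u ε i) ^ (Nat.floor (1 * (π ε i * v ε))) :=
      Finset.prod_pos (fun i _ => pow_pos (by linarith [h3 i]) _)
    have := (sandwich (u ε) (fun i => Nat.floor (1 * (π ε i * v ε))) _ h1 h2
      (fun i => Finset.single_le_sum (fun i _ => h2 i) (Finset.mem_univ i))).1
    rw [← Real.le_log_iff_exp_le hpos] at this
    have h4 : W ε ≤ S ε / (1 - ∑ i, u ε i) := by
      simp only [W, S]; linarith
    rw [le_div_iff₀ (by linarith)] at h4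
    linarith
  have hS : Tendsto S l (𝓝 (-Real.log L)) := by
    have h1 : Tendsto (fun ε => (1 - ∑ i, u ε i) * W ε) l (𝓝 ((1 - 0) * (-Real.log L))) :=
      (tendsto_const_nhds.sub hU).mul hW
    rw [sub_zero, one_mul] at h1
    exact tendsto_of_tendsto_of_tendsto_of_le_of_le' h1 hW hlow hSW
  have h2 := hS.add hU
  rw [add_zero] at h2
  refine tendsto_of_tendsto_of_tendsto_of_le_of_le' hS h2 ?_ ?_
  · filter_upwards [hfl, hu] with ε h1 h2
    simp only [S]
    rw [Finset.mul_sum]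
    apply Finset.sum_le_sum
    intro i _
    have := (h1 i).2
    nlinarith [h2 i, mul_le_mul_of_nonneg_right this (h2 i)]
  · filter_upwards [hfl, hu] with ε h1 h2
    simp only [S]
    rw [Finset.mul_sum, ← Finset.sum_add_distrib]
    apply Finset.sum_le_sum
    intro i _
    have := (h1 i).1
    nlinarith [h2 i, mul_le_mul_of_nonneg_right this (h2 i)]

end Analytic

section Laplace

lemma lap_int (μ : Measure ℝ) [IsProbabilityMeasure μ] (h0 : μ (Iio 0) = 0) (s : ℝ) (hs : 0 < s) :
    Integrable (fun x => Real.exp (-(s * x))) μ ∧ ∀ᵐ x ∂μ, 0 ≤ x ∧ Real.exp (-(s * x)) ≤ 1 := by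
  have hae : ∀ᵐ x ∂μ, 0 ≤ x := by
    rw [ae_iff]
    convert h0 using 2
    ext x; simp
  have hae2 : ∀ᵐ x ∂μ, 0 ≤ x ∧ Real.exp (-(s * x)) ≤ 1 := by
    filter_upwards [hae] with x hx
    refine ⟨hx, ?_⟩
    rw [Real.exp_le_one_iff]
    have := mul_nonneg hs.le hx
    linarith
  refine ⟨Integrable.of_bound (C := 1) (by fun_prop) ?_, hae2⟩
  filter_upwards [hae2] with x hx
  rw [Real.norm_of_nonneg (Real.exp_pos _).le]
  exact hx.2

lemma lap_lt_one (μ : Measure ℝ) [IsProbabilityMeasure μ] (h0 : μ (Iio 0) = 0) (h1 : μ {0} < 1)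
    (s : ℝ) (hs : 0 < s) : ∫ x, Real.exp (-(s * x)) ∂μ < 1 := by
  obtain ⟨hi, hae⟩ := lap_int μ h0 s hs
  by_contra hcon
  have h2 : ∫ x, (1 - Real.exp (-(s * x))) ∂μ = 0 := by
    apply le_antisymm
    · rw [integral_sub (integrable_const _) hi]
      simp only [integral_const, probReal_univ, smul_eq_mul, mul_one]
      linarith
    · apply integral_nonneg_of_ae
      filter_upwards [hae] with x hx
      simp only [Pi.zero_apply]
      linarith [hx.2]
  have h2 := (integral_eq_zero_iff_of_nonneg_ae (f := fun x => 1 - Real.exp (-(s * x))) (by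
    filter_upwards [hae] with x hx
    simp only [Pi.zero_apply]
    linarith [hx.2]) ((integrable_const _).sub hi)).1 h2
  have h3 : ∀ᵐ x ∂μ, x = 0 := by
    filter_upwards [h2] with x hx
    simp only [Pi.zero_apply] at hx
    have : Real.exp (-(s * x)) = 1 := by linarith
    rw [Real.exp_eq_one_iff] at this
    have : s * x = 0 := by linarith
    rcases mul_eq_zero.1 this with h | h
    · exact absurd h hs.ne'
    · exact h
  have h4 : μ {0} = 1 := by
    have := (mem_ae_iff_prob_eq_one (μ := μ) (measurableSet_singleton (0:ℝ))).1 h3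
    exact this
  exact absurd h4 h1.ne

lemma lap_tendsto (μ : Measure ℝ) [IsProbabilityMeasure μ] (h0 : μ (Iio 0) = 0) :
    Tendsto (fun s => ∫ x, Real.exp (-(s * x)) ∂μ) (𝓝[>] (0:ℝ)) (𝓝 1) := by
  have : Tendsto (fun s => ∫ x, Real.exp (-(s * x)) ∂μ) (𝓝[>] (0:ℝ)) (𝓝 (∫ _x, (1:ℝ) ∂μ)) := by
    apply tendsto_integral_filter_of_dominated_convergence (fun _ => (1:ℝ))
    · exact Eventually.of_forall fun s => by fun_prop
    · filter_upwards [self_mem_nhdsWithin] with s hs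
      filter_upwards [(lap_int μ h0 s hs).2] with x hx
      rw [Real.norm_of_nonneg (Real.exp_pos _).le]
      exact hx.2
    · exact integrable_const _
    · refine Eventually.of_forall fun x => ?_
      have : Tendsto (fun s : ℝ => Real.exp (-(s * x))) (𝓝 0) (𝓝 (Real.exp (-(0 * x)))) :=
        (by fun_prop : Continuous fun s : ℝ => Real.exp (-(s * x))).tendsto 0
      simp only [zero_mul, neg_zero, Real.exp_zero] at this
      exact this.mono_left nhdsWithin_le_nhds
  simpa using this

lemma exists_mu {Ω : Type} [MeasurableSpace Ω] (Pq : ℝ → Measure Ω)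
    (hP : ∀ᶠ ε in 𝓝[>] (0:ℝ), IsProbabilityMeasure (Pq ε)) (X : ℝ → Ω → ℝ)
    (hX : ∀ᶠ ε in 𝓝[>] (0:ℝ), AEMeasurable (fun ω => Real.exp (-(X ε ω))) (Pq ε))
    (hnn : ∀ ε ω, 0 ≤ X ε ω) (A : ℝ → ℝ)
    (hlim : ∀ s > 0, Tendsto (fun ε => ∫ ω, Real.exp (-(s * X ε ω)) ∂(Pq ε)) (𝓝[>] (0:ℝ))
      (𝓝 (Real.exp (-(A s)))))
    (hA : ∀ s > 0, 0 < A s) (hA0 : Tendsto A (𝓝[>] (0:ℝ)) (𝓝 0)) :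
    ∃ μ : Measure ℝ, IsProbabilityMeasure μ ∧ μ (Iio 0) = 0 ∧ μ {0} < 1 ∧
      ∀ s > 0, ∫ x, Real.exp (-(s * x)) ∂μ = Real.exp (-(A s)) := by
  classical
  let Y : ℝ → Ω → unitInterval := fun ε ω =>
    ⟨Real.exp (-(X ε ω)), (Real.exp_pos _).le, by
      rw [Real.exp_le_one_iff]; linarith [hnn ε ω]⟩
  have hY : ∀ᶠ ε in 𝓝[>] (0:ℝ), AEMeasurable (Y ε) (Pq ε) := by
    filter_upwards [hX] with ε h
    exact h.subtype_mk
  have hρ : ∃ ρ : ℝ → ProbabilityMeasure unitInterval, ∀ᶠ ε in 𝓝[>] (0:ℝ),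
      (ρ ε : Measure unitInterval) = (Pq ε).map (Y ε) := by
    have hc : ∀ ε, ∃ r : ProbabilityMeasure unitInterval,
        IsProbabilityMeasure ((Pq ε).map (Y ε)) →
          (r : Measure unitInterval) = (Pq ε).map (Y ε) := by
      intro ε
      by_cases h : IsProbabilityMeasure ((Pq ε).map (Y ε))
      · exact ⟨⟨_, h⟩, fun _ => rfl⟩
      · exact ⟨⟨Measure.dirac 0, inferInstance⟩, fun h' => absurd h' h⟩
    choose ρ hρ using hc
    refine ⟨ρ, ?_⟩
    filter_upwards [hP, hY] with ε h1 h2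
    exact hρ ε (Measure.isProbabilityMeasure_map h2)
  obtain ⟨ρ, hρ⟩ := hρ
  let 𝒰 : Ultrafilter ℝ := Ultrafilter.of (𝓝[>] (0:ℝ))
  have hU : (𝒰 : Filter ℝ) ≤ 𝓝[>] (0:ℝ) := Ultrafilter.of_le _
  obtain ⟨r, -, hr⟩ := isCompact_univ.ultrafilter_le_nhds (𝒰.map ρ) (by simp)
  have hr : Tendsto ρ 𝒰 (𝓝 r) := hr
  rw [ProbabilityMeasure.tendsto_iff_forall_integral_tendsto] at hr
  have hmom : ∀ s > 0, ∫ y : unitInterval, (y : ℝ) ^ s ∂(r : Measure unitInterval)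
      = Real.exp (-(A s)) := by
    intro s hs
    have hcont : Continuous (fun y : unitInterval => (y : ℝ) ^ s) :=
      continuous_subtype_val.rpow_const (fun _ => Or.inr hs.le)
    have h1 := hr (BoundedContinuousFunction.mkOfCompact ⟨_, hcont⟩)
    simp only [BoundedContinuousFunction.mkOfCompact_apply, ContinuousMap.coe_mk] at h1
    have h2 := (hlim s hs).mono_left hU
    refine tendsto_nhds_unique h1 (h2.congr' ?_)
    filter_upwards [hU hρ, hU hY] with ε h3 h4
    rw [h3, integral_map h4 hcont.aestronglyMeasurable]
    apply integral_congr_ae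
    refine Eventually.of_forall fun ω => ?_
    simp only [Y]
    rw [← Real.exp_mul]
    congr 1; ring
  have hpos : ∀ᵐ y : unitInterval ∂(r : Measure unitInterval), (0:ℝ) < (y : ℝ) := by
    have hms : MeasurableSet {y : unitInterval | (0:ℝ) < y} :=
      measurableSet_lt measurable_const measurable_subtype_coe
    have h1 : Tendsto (fun s : ℝ => ∫ y : unitInterval, (y : ℝ) ^ s ∂(r : Measure unitInterval))
        (𝓝[>] (0:ℝ)) (𝓝 (∫ y : unitInterval, {y : unitInterval | (0:ℝ) < y}.indicator
          (fun _ => (1:ℝ)) y ∂(r : Measure unitInterval))) := by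
      apply tendsto_integral_filter_of_dominated_convergence (fun _ => (1:ℝ))
      · exact Eventually.of_forall fun s =>
          (measurable_subtype_coe.pow_const s).aestronglyMeasurable
      · filter_upwards [self_mem_nhdsWithin] with s hs
        refine Eventually.of_forall fun y => ?_
        rw [Real.norm_of_nonneg (Real.rpow_nonneg y.2.1 _)]
        exact Real.rpow_le_one y.2.1 y.2.2 (le_of_lt hs)
      · exact integrable_const _
      · refine Eventually.of_forall fun y => ?_
        by_cases hy : (0:ℝ) < y
        · have e : {y : unitInterval | (0:ℝ) < y}.indicator (fun _ => (1:ℝ)) y = 1 :=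
            Set.indicator_of_mem (s := {y : unitInterval | (0:ℝ) < y}) hy _
          rw [e]
          have : Tendsto (fun s : ℝ => (y : ℝ) ^ s) (𝓝 0) (𝓝 ((y : ℝ) ^ (0:ℝ))) :=
            (Real.continuous_const_rpow hy.ne').tendsto 0
          rw [Real.rpow_zero] at this
          exact this.mono_left nhdsWithin_le_nhds
        · have e : {y : unitInterval | (0:ℝ) < y}.indicator (fun _ => (1:ℝ)) y = 0 :=
            Set.indicator_of_notMem (s := {y : unitInterval | (0:ℝ) < y}) hy _
          rw [e]
          have hy0 : (y : ℝ) = 0 := le_antisymm (not_lt.1 hy) y.2.1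
          apply tendsto_const_nhds.congr'
          filter_upwards [self_mem_nhdsWithin] with s hs
          rw [hy0, Real.zero_rpow (ne_of_gt hs)]
    rw [integral_indicator_const (1:ℝ) hms, smul_eq_mul, mul_one] at h1
    have h2 : Tendsto (fun s : ℝ => ∫ y : unitInterval, (y : ℝ) ^ s ∂(r : Measure unitInterval))
        (𝓝[>] (0:ℝ)) (𝓝 (Real.exp (-0))) := by
      refine ((Real.continuous_exp.tendsto _).comp hA0.neg).congr' ?_
      filter_upwards [self_mem_nhdsWithin] with s hs
      exact (hmom s hs).symm
    have h3 := tendsto_nhds_unique h1 h2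
    rw [neg_zero, Real.exp_zero] at h3
    have h4 : (r : Measure unitInterval) {y : unitInterval | (0:ℝ) < y} = 1 := by
      rw [measureReal_def] at h3
      have := ENNReal.ofReal_toReal (measure_ne_top (r : Measure unitInterval)
        {y : unitInterval | (0:ℝ) < y})
      rw [h3] at this
      simpa using this.symm
    exact (mem_ae_iff_prob_eq_one hms).2 h4
  have hmlog : Measurable (fun y : unitInterval => -Real.log (y : ℝ)) :=
    (Real.measurable_log.comp measurable_subtype_coe).neg
  have hpr : IsProbabilityMeasure
      ((r : Measure unitInterval).map (fun y : unitInterval => -Real.log (y : ℝ))) :=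
    Measure.isProbabilityMeasure_map hmlog.aemeasurable
  have hlap : ∀ s > 0, ∫ x, Real.exp (-(s * x))
      ∂((r : Measure unitInterval).map (fun y : unitInterval => -Real.log (y : ℝ)))
        = Real.exp (-(A s)) := by
    intro s hs
    rw [integral_map hmlog.aemeasurable (by fun_prop), ← hmom s hs]
    apply integral_congr_ae
    filter_upwards [hpos] with y hy
    rw [Real.rpow_def_of_pos hy]
    congr 1; ring
  refine ⟨_, hpr, ?_, ?_, hlap⟩
  · rw [Measure.map_apply hmlog measurableSet_Iio]
    convert measure_empty (μ := (r : Measure unitInterval))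
    ext y
    have := Real.log_nonpos y.2.1 y.2.2
    simp
    exact this
  · refine lt_of_le_of_ne prob_le_one ?_
    intro h
    have h0 := (mem_ae_iff_prob_eq_one (measurableSet_singleton (0:ℝ))).2 h
    have h1 := hlap 1 one_pos
    have h2 : ∫ x, Real.exp (-(1 * x))
      ∂((r : Measure unitInterval).map (fun y : unitInterval => -Real.log (y : ℝ))) = ∫ x, (1:ℝ)
      ∂((r : Measure unitInterval).map (fun y : unitInterval => -Real.log (y : ℝ))) := by
      apply integral_congr_ae
      filter_upwards [h0] with x hx
      have hx : x = 0 := hx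
      simp [hx]
    rw [h2] at h1
    simp only [integral_const, probReal_univ, smul_eq_mul, mul_one] at h1
    have h3 : Real.exp (-(A 1)) < 1 := by
      rw [Real.exp_lt_one_iff]; linarith [hA 1 one_pos]
    linarith

end Laplace

section Final

lemma mix_formula {m : ℕ} {Ω : Type} [MeasurableSpace Ω] (P : Fin m → Measure Ω)
    (hP : ∀ i, IsProbabilityMeasure (P i)) (q : Fin m → ℝ) (hq0 : ∀ i, 0 ≤ q i)
    (hq1 : ∑ i, q i = 1) (R : Measure Ω) (hR : R = ∑ i, ENNReal.ofReal (q i) • P i)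
    (f : Ω → ℝ) (hf : ∀ i, AEMeasurable f (P i)) (hf0 : ∀ ω, 0 ≤ f ω) (hf1 : ∀ ω, f ω ≤ 1)
    (L : ℝ) (hL : ∀ i, ∫ ω, f ω ∂(P i) = L) :
    AEMeasurable f R ∧ ∫ ω, f ω ∂(R) = L := by
  subst hR
  have hfin : ∀ i, Integrable f (P i) := fun i =>
    Integrable.of_bound (C := 1) (hf i).aestronglyMeasurable
      (Eventually.of_forall fun ω => by rw [Real.norm_of_nonneg (hf0 ω)]; exact hf1 ω)
  have hfin2 : ∀ i ∈ (Finset.univ : Finset (Fin m)), Integrable f (ENNReal.ofReal (q i) • P i) :=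
    fun i _ => (hfin i).smul_measure ENNReal.ofReal_ne_top
  refine ⟨(integrable_finsetSum_measure.2 hfin2).aemeasurable, ?_⟩
  rw [integral_finsetSum_measure hfin2]
  simp only [integral_smul_measure, hL, smul_eq_mul]
  rw [← Finset.sum_mul]
  have : ∑ i, (ENNReal.ofReal (q i)).toReal = 1 := by
    rw [← hq1]
    exact Finset.sum_congr rfl fun i _ => ENNReal.toReal_ofReal (hq0 i)
  rw [this, one_mul]

lemma mix_prob {m : ℕ} {Ω : Type} [MeasurableSpace Ω] (P : Fin m → Measure Ω)
    (hP : ∀ i, IsProbabilityMeasure (P i)) (q : Fin m → ℝ) (hq0 : ∀ i, 0 ≤ q i)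
    (hq1 : ∑ i, q i = 1) (R : Measure Ω) (hR : R = ∑ i, ENNReal.ofReal (q i) • P i) :
    IsProbabilityMeasure R := by
  subst hR
  constructor
  simp only [Measure.coe_finsetSum, Finset.sum_apply, Measure.smul_apply, measure_univ,
    smul_eq_mul, mul_one]
  rw [← ENNReal.ofReal_sum_of_nonneg (fun i _ => hq0 i), hq1, ENNReal.ofReal_one]

lemma exists_step (s : ℕ → ℝ) (hs : ∀ r, 0 ≤ s r) (a : ℕ → ℕ) (R : ℕ)
    (ha : ∀ r < R, a r ≤ a (r + 1)) :
    ∃ sf : ℕ → ℝ, (∀ n, 0 ≤ sf n) ∧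
      ∀ r ∈ Finset.Icc 1 R, ∀ n ∈ Finset.Ico (a (r - 1)) (a r), sf n = s r := by
  induction R with
  | zero => exact ⟨fun _ => 0, fun _ => le_rfl, by simp⟩
  | succ R ih =>
    obtain ⟨sf, h0, h1⟩ := ih (fun r hr => ha r (by omega))
    have hmono : ∀ d r, r + d = R → a r ≤ a R := by
      intro d
      induction d with
      | zero => intro r hr; simp at hr; rw [hr]
      | succ d ih => intro r hr; exact (ha r (by omega)).trans (ih (r + 1) (by omega))
    refine ⟨fun n => if n < a R then sf n else s (R + 1), ?_, ?_⟩
    · intro n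
      dsimp only
      split_ifs
      · exact h0 n
      · exact hs _
    · intro r hr n hn
      rw [Finset.mem_Icc] at hr
      rw [Finset.mem_Ico] at hn
      dsimp only
      rcases Nat.lt_or_ge r (R + 1) with h | h
      · have := hmono (R - r) r (by omega)
        rw [if_pos (by omega)]
        exact h1 r (Finset.mem_Icc.2 ⟨hr.1, by omega⟩) n (Finset.mem_Ico.2 hn)
      · obtain rfl : r = R + 1 := by omega
        rw [Nat.add_sub_cancel] at hn
        rw [if_neg (by omega)]

lemma prod_blocks {M : Type} [CommMonoid M] (G : ℕ → M) (a : ℕ → ℕ) (h0 : a 0 = 0) (R : ℕ)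
    (ha : ∀ r < R, a r ≤ a (r + 1)) :
    ∏ n ∈ Finset.range (a R), G n
      = ∏ r ∈ Finset.Icc 1 R, ∏ n ∈ Finset.Ico (a (r - 1)) (a r), G n := by
  induction R with
  | zero => simp [h0]
  | succ R ih =>
    rw [Finset.prod_Icc_succ_top (by omega), ← ih (fun r hr => ha r (by omega)),
      Nat.add_sub_cancel, Finset.prod_range_mul_prod_Ico _ (ha R (by omega))]

lemma sum_blocks (G : ℕ → ℝ) (a : ℕ → ℕ) (h0 : a 0 = 0) (R : ℕ)
    (ha : ∀ r < R, a r ≤ a (r + 1)) :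
    ∑ n ∈ Finset.range (a R), G n
      = ∑ r ∈ Finset.Icc 1 R, ∑ n ∈ Finset.Ico (a (r - 1)) (a r), G n := by
  induction R with
  | zero => simp [h0]
  | succ R ih =>
    rw [Finset.sum_Icc_succ_top (by omega), ← ih (fun r hr => ha r (by omega)),
      Nat.add_sub_cancel, Finset.sum_range_add_sum_Ico _ (ha R (by omega))]

lemma incr_formula {m : ℕ} {Ω : Type} [MeasurableSpace Ω] {η : ℕ → Ω → Fin m} {κ : ℕ → Ω → ℝ}
    {P : Fin m → Measure Ω} (H : IsMRP η κ P)
    (hrec : ∀ i0, ∀ᵐ ω ∂(P i0), ∀ i, ∃ᶠ k in atTop, η k ω = i)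
    (s : ℕ → ℝ) (hs : ∀ r, 0 ≤ s r) (a : Fin m → ℕ → ℕ) (ha0 : ∀ i, a i 0 = 0) (R : ℕ)
    (ha : ∀ i, ∀ r < R, a i r ≤ a i (r + 1))
    (q : Fin m → ℝ) (hq0 : ∀ i, 0 ≤ q i)
    (hq1 : ∑ i, q i = 1) (S : Measure Ω) (hS : S = ∑ i, ENNReal.ofReal (q i) • P i) :
    AEMeasurable (fun ω => Real.exp (-(∑ r ∈ Finset.Icc 1 R, s r *
      (∑ i, ∑ n ∈ Finset.range (a i r), kHit η κ i n ω
        - ∑ i, ∑ n ∈ Finset.range (a i (r - 1)), kHit η κ i n ω)))) S ∧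
    ∫ ω, Real.exp (-(∑ r ∈ Finset.Icc 1 R, s r *
      (∑ i, ∑ n ∈ Finset.range (a i r), kHit η κ i n ω
        - ∑ i, ∑ n ∈ Finset.range (a i (r - 1)), kHit η κ i n ω))) ∂S
      = ∏ r ∈ Finset.Icc 1 R, ∏ i, (∫ ω, Real.exp (-(s r * κ 1 ω)) ∂(P i)) ^
          (a i r - a i (r - 1)) := by
  choose sf hsf0 hsf using fun i => exists_step s hs (a i) R (ha i)
  have key : ∀ ω, ∑ r ∈ Finset.Icc 1 R, s r *
      (∑ i, ∑ n ∈ Finset.range (a i r), kHit η κ i n ω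
        - ∑ i, ∑ n ∈ Finset.range (a i (r - 1)), kHit η κ i n ω)
      = ∑ i, ∑ n ∈ Finset.range (a i R), sf i n * kHit η κ i n ω := by
    intro ω
    simp_rw [← Finset.sum_sub_distrib, Finset.mul_sum]
    rw [Finset.sum_comm]
    refine Finset.sum_congr rfl fun i _ => ?_
    rw [sum_blocks _ (a i) (ha0 i) R (ha i)]
    refine Finset.sum_congr rfl fun r hr => ?_
    have hr' := Finset.mem_Icc.1 hr
    have hle : a i (r - 1) ≤ a i r := by
      have := ha i (r - 1) (by omega)
      rwa [Nat.sub_add_cancel hr'.1] at this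
    rw [← Finset.sum_Ico_eq_sub _ hle, Finset.mul_sum]
    exact Finset.sum_congr rfl fun n hn => by rw [hsf i r hr n hn]
  have key2 : ∏ i, ∏ n ∈ Finset.range (a i R), ∫ ω, Real.exp (-(sf i n * κ 1 ω)) ∂(P i)
      = ∏ r ∈ Finset.Icc 1 R, ∏ i, (∫ ω, Real.exp (-(s r * κ 1 ω)) ∂(P i)) ^
          (a i r - a i (r - 1)) := by
    rw [Finset.prod_comm]
    refine Finset.prod_congr rfl fun i _ => ?_
    rw [prod_blocks _ (a i) (ha0 i) R (ha i)]
    refine Finset.prod_congr rfl fun r hr => ?_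
    rw [Finset.prod_congr rfl (fun n hn => by rw [hsf i r hr n hn]), Finset.prod_const,
      Nat.card_Ico]
  simp_rw [key]
  rw [← key2]
  refine mix_formula P H.prob q hq0 hq1 S hS _
    (fun i0 => (prod_formula H hrec sf hsf0 (fun i => a i R) i0).1)
    (fun ω => (Real.exp_pos _).le) ?_ _
    (fun i0 => (prod_formula H hrec sf hsf0 (fun i => a i R) i0).2)
  intro ω
  rw [Real.exp_le_one_iff, neg_nonpos]
  exact Finset.sum_nonneg fun i _ => Finset.sum_nonneg fun n _ =>
    mul_nonneg (hsf0 i n) (H.nn _ _)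

lemma pi_lower {m : ℕ} (hm : 0 < m) (p : Fin m → Fin m → ℝ) (hp : ∀ i j, 0 ≤ p i j)
    (π : Fin m → ℝ) (hπ : IsStationaryDist p π) (N : ℕ) (c : ℕ → Fin m) (hcN : c N = c 0)
    (hall : ∀ i : Fin m, ∃ k ≤ N, c k = i) (δ : ℝ) (hδ : 0 < δ) (hδ1 : δ ≤ 1)
    (hpc : ∀ k < N, δ ≤ p (c k) (c (k + 1))) (i : Fin m) :
    δ ^ (N + N) * (1 / m) ≤ π i := by
  obtain ⟨h0, h1, h2⟩ := hπ
  have hstep : ∀ k < N, δ * π (c k) ≤ π (c (k + 1)) := by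
    intro k hk
    rw [h2 (c (k + 1))]
    calc δ * π (c k) ≤ π (c k) * p (c k) (c (k + 1)) := by
          rw [mul_comm]; exact mul_le_mul_of_nonneg_left (hpc k hk) (h0 _)
      _ ≤ _ := Finset.single_le_sum (f := fun i => π i * p i (c (k + 1)))
          (fun i _ => mul_nonneg (h0 i) (hp _ _)) (Finset.mem_univ _)
  have up : ∀ d k0, k0 + d ≤ N → δ ^ d * π (c k0) ≤ π (c (k0 + d)) := by
    intro d
    induction d with
    | zero => intro k0 _; simp
    | succ d ih =>
      intro k0 hd
      calc δ ^ (d + 1) * π (c k0) = δ * (δ ^ d * π (c k0)) := by ring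
        _ ≤ δ * π (c (k0 + d)) := mul_le_mul_of_nonneg_left (ih k0 (by omega)) hδ.le
        _ ≤ _ := hstep (k0 + d) (by omega)
  have up' : ∀ d k0, k0 + d ≤ N → δ ^ N * π (c k0) ≤ π (c (k0 + d)) := by
    intro d k0 hd
    refine le_trans ?_ (up d k0 hd)
    exact mul_le_mul_of_nonneg_right (pow_le_pow_of_le_one hδ.le hδ1 (by omega)) (h0 _)
  have hm' : (0:ℝ) < m := by exact_mod_cast hm
  obtain ⟨j, hj⟩ : ∃ j, 1 / (m:ℝ) ≤ π j := by
    by_contra hcon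
    push Not at hcon
    have : Nonempty (Fin m) := ⟨⟨0, hm⟩⟩
    have : ∑ j, π j < ∑ _j : Fin m, 1 / (m:ℝ) :=
      Finset.sum_lt_sum_of_nonempty Finset.univ_nonempty (fun j _ => hcon j)
    rw [h1] at this
    simp only [Finset.sum_const, Finset.card_univ, Fintype.card_fin, nsmul_eq_mul] at this
    rw [mul_one_div_cancel hm'.ne'] at this
    exact lt_irrefl _ this
  obtain ⟨k0, hk0, rfl⟩ := hall j
  obtain ⟨k, hk, rfl⟩ := hall i
  have e1 := up' (N - k0) k0 (by omega)
  rw [show k0 + (N - k0) = N by omega, hcN] at e1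
  have e2 := up' k 0 (by omega)
  rw [zero_add] at e2
  calc δ ^ (N + N) * (1 / m) = δ ^ N * (δ ^ N * (1 / m)) := by ring
    _ ≤ δ ^ N * (δ ^ N * π (c k0)) := by gcongr
    _ ≤ δ ^ N * π (c 0) := by gcongr
    _ ≤ _ := e2

lemma common_delta {N : ℕ} (f : ℝ → ℕ → ℝ) (l : Filter ℝ) [l.NeBot]
    (hf0 : ∀ᶠ ε in l, ∀ k, 0 ≤ f ε k)
    (hf : ∀ k < N, 0 < Filter.liminf (fun ε => f ε k) l) :
    ∃ δ : ℝ, 0 < δ ∧ δ ≤ 1 ∧ ∀ᶠ ε in l, ∀ k < N, δ ≤ f ε k := by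
  induction N with
  | zero => exact ⟨1, one_pos, le_rfl, by simp⟩
  | succ N ih =>
    obtain ⟨δ, h1, h2, h3⟩ := ih (fun k hk => hf k (by omega))
    have h4 := hf N (by omega)
    have hb : l.IsBoundedUnder (· ≥ ·) (fun ε => f ε N) :=
      isBoundedUnder_of_eventually_ge (a := 0) (hf0.mono fun ε h => h N)
    have h5 := eventually_lt_of_lt_liminf (half_lt_self h4) hb
    refine ⟨min δ (liminf (fun ε => f ε N) l / 2), lt_min h1 (half_pos h4),
      (min_le_left _ _).trans h2, ?_⟩
    filter_upwards [h3, h5] with ε h6 h7 k hk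
    rcases Nat.lt_or_ge k N with h | h
    · exact (min_le_left _ _).trans (h6 k h)
    · obtain rfl : k = N := by omega
      exact (min_le_right _ _).trans h7.le

end Final

/-- Lemma 4: under condition B, condition D₁ holds if and only if
`κ̃_ε(1)` converges in distribution to a nonnegative random variable `θ₀` with law not
concentrated at zero; in that case `E e^{−sθ₀} = e^{−A(s)}` and the processes `κ̃_ε(·)`
converge in finite-dimensional distributions to a nonnegative Lévy process with
Laplace transforms `e^{−tA(s)}`. -/
theorem stmt11 {m : ℕ} (hm : 0 < m) (ε₀ : ℝ) (hε₀ : 0 < ε₀)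
    {Ω : Type} [MeasurableSpace Ω]
    (η : ℝ → ℕ → Ω → Fin m) (κ : ℝ → ℕ → Ω → ℝ)
    (Pstart : ℝ → Fin m → Measure Ω)
    (hprob : ∀ ε i, IsProbabilityMeasure (Pstart ε i))
    (hmeas : ∀ ε n, Measurable (η ε n) ∧ Measurable (κ ε n))
    (hκnn : ∀ ε n ω, 0 ≤ κ ε n ω)
    (Q : ℝ → Fin m → Fin m → ℝ → ℝ)
    (hMRP : ∀ ε ∈ Ioc (0:ℝ) ε₀, ∀ n : ℕ, ∀ I : ℕ → Fin m, ∀ T : ℕ → ℝ,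
      Pstart ε (I 0) {ω | ∀ k ≤ n, (η ε k ω = I k ∧ (1 ≤ k → κ ε k ω ≤ T k))}
        = ENNReal.ofReal (∏ k ∈ Finset.Icc 1 n, Q ε (I (k - 1)) (I k) (T k)))
    (p : ℝ → Fin m → Fin m → ℝ)
    (hp : ∀ ε ∈ Ioc (0:ℝ) ε₀, ∀ i j, p ε i j = (Pstart ε i {ω | η ε 1 ω = j}).toReal)
    (hB : CondB p)
    (π : ℝ → Fin m → ℝ)
    (hπ : ∀ᶠ ε in 𝓝[>] (0:ℝ), IsStationaryDist (fun i j => p ε i j) (π ε))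
    -- arbitrary family of initial distributions
    (q : ℝ → Fin m → ℝ) (Pq : ℝ → Measure Ω)
    (hq : ∀ ε ∈ Ioc (0:ℝ) ε₀, (∀ i, 0 ≤ q ε i) ∧ ∑ i, q ε i = 1)
    (hmix : ∀ ε ∈ Ioc (0:ℝ) ε₀, Pq ε = ∑ i, ENNReal.ofReal (q ε i) • Pstart ε i)
    (v : ℝ → ℝ) (hvpos : ∀ ε ∈ Ioc (0:ℝ) ε₀, 0 < v ε)
    (hvinf : Tendsto v (𝓝[>] (0:ℝ)) atTop) :
    -- condition D₁ holds iff κ̃_ε(1) converges in distribution to a nonnegative limit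
    -- not concentrated at zero
    ((∃ A : ℝ → ℝ,
        (∀ s > 0, Tendsto (fun ε => v ε * (1 - lapPhi Pstart κ π ε s))
          (𝓝[>] (0:ℝ)) (𝓝 (A s))) ∧
        (∀ s > 0, 0 < A s) ∧ Tendsto A (𝓝[>] (0:ℝ)) (𝓝 0)) ↔
      (∃ μ : Measure ℝ, IsProbabilityMeasure μ ∧ μ (Iio 0) = 0 ∧ μ {0} < 1 ∧
        ∀ s > 0, Tendsto (fun ε => ∫ ω, Real.exp (-(s * kTil η κ π v ε 1 ω)) ∂(Pq ε))
          (𝓝[>] (0:ℝ)) (𝓝 (∫ x, Real.exp (-(s * x)) ∂μ)))) ∧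
    -- in this case the limit has Laplace transform e^{−A(s)}, and the processes κ̃_ε(·)
    -- converge in finite-dimensional distributions to the Lévy process θ₀(·)
    ∀ A : ℝ → ℝ,
      (∀ s > 0, Tendsto (fun ε => v ε * (1 - lapPhi Pstart κ π ε s))
        (𝓝[>] (0:ℝ)) (𝓝 (A s))) →
      (∀ s > 0, 0 < A s) → Tendsto A (𝓝[>] (0:ℝ)) (𝓝 0) → A 0 = 0 →
      (∀ s > 0, Tendsto (fun ε => ∫ ω, Real.exp (-(s * kTil η κ π v ε 1 ω)) ∂(Pq ε))
        (𝓝[>] (0:ℝ)) (𝓝 (Real.exp (-(A s))))) ∧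
      (∀ n : ℕ, ∀ t : ℕ → ℝ, t 0 = 0 → (∀ r < n, t r ≤ t (r + 1)) →
        ∀ s : ℕ → ℝ, (∀ r, 0 ≤ s r) →
        Tendsto
          (fun ε => ∫ ω, Real.exp (-(∑ r ∈ Finset.Icc 1 n,
            s r * (kTil η κ π v ε (t r) ω - kTil η κ π v ε (t (r - 1)) ω))) ∂(Pq ε))
          (𝓝[>] (0:ℝ))
          (𝓝 (Real.exp (-(∑ r ∈ Finset.Icc 1 n, A (s r) * (t r - t (r - 1))))))) := by
  classical
  obtain ⟨N, -, c, hcN, hall, hlinf⟩ := hB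
  have hE : ∀ᶠ ε in 𝓝[>] (0:ℝ), ε ∈ Ioc (0:ℝ) ε₀ := Ioc_mem_nhdsGT hε₀
  have hp0 : ∀ᶠ ε in 𝓝[>] (0:ℝ), ∀ i j, 0 ≤ p ε i j := by
    filter_upwards [hE] with ε h i j
    rw [hp ε h]; exact ENNReal.toReal_nonneg
  obtain ⟨δ, hδ, hδ1, hpδ⟩ := common_delta (N := N) (fun ε k => p ε (c k) (c (k + 1)))
    (𝓝[>] (0:ℝ)) (hp0.mono fun ε h k => h _ _) hlinf
  have hc0 : 0 < δ ^ (N + N) * (1 / (m:ℝ)) := by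
    have : (0:ℝ) < m := by exact_mod_cast hm
    positivity
  have hπlow : ∀ᶠ ε in 𝓝[>] (0:ℝ), ∀ i, δ ^ (N + N) * (1 / (m:ℝ)) ≤ π ε i := by
    filter_upwards [hp0, hpδ, hπ] with ε h1 h2 h3 i
    exact pi_lower hm (p ε) h1 (π ε) h3 N c hcN hall δ hδ hδ1 h2 i
  have hM : ∀ᶠ ε in 𝓝[>] (0:ℝ), IsMRP (η ε) (κ ε) (Pstart ε) := by
    filter_upwards [hE] with ε h
    exact isMRP_of (η ε) (κ ε) (Pstart ε) (hprob ε) (fun n => (hmeas ε n).1)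
      (fun n => (hmeas ε n).2) (hκnn ε) (Q ε) (hMRP ε h)
  have hR : ∀ᶠ ε in 𝓝[>] (0:ℝ), ∀ i0, ∀ᵐ ω ∂(Pstart ε i0), ∀ i, ∃ᶠ k in atTop, η ε k ω = i := by
    filter_upwards [hE, hM, hpδ] with ε h1 h2 h3 i0
    refine recurrent h2 N c hcN hall ?_ i0
    intro k hk h0
    have := h3 k hk
    rw [hp ε h1, h0, ENNReal.toReal_zero] at this
    linarith
  let u : ℝ → ℝ → Fin m → ℝ := fun s ε i => 1 - ∫ ω, Real.exp (-(s * κ ε 1 ω)) ∂(Pstart ε i)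
  have hu0 : ∀ s, 0 ≤ s → ∀ᶠ ε in 𝓝[>] (0:ℝ), ∀ i, 0 ≤ u s ε i := by
    intro s hs
    filter_upwards [hM] with ε h i
    exact sub_nonneg.2 (phi_le h i s hs)
  have hu1 : ∀ s, 0 ≤ s → ∀ᶠ ε in 𝓝[>] (0:ℝ), ∀ i, u s ε i < 1 := by
    intro s hs
    filter_upwards [hM] with ε h i
    have := phi_pos h i s hs
    simp only [u]
    linarith
  have hlap : ∀ s, (fun ε => v ε * (1 - lapPhi Pstart κ π ε s)) =ᶠ[𝓝[>] (0:ℝ)]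
      (fun ε => v ε * ∑ i, π ε i * u s ε i) := by
    intro s
    filter_upwards [hπ] with ε h
    congr 1
    simp only [u, lapPhi, mul_sub, mul_one, Finset.sum_sub_distrib, h.2.1]
  -- the product formula for the increments
  have hF2 : ∀ n : ℕ, ∀ t : ℕ → ℝ, t 0 = 0 → (∀ r < n, t r ≤ t (r + 1)) →
      ∀ s : ℕ → ℝ, (∀ r, 0 ≤ s r) → ∀ᶠ ε in 𝓝[>] (0:ℝ),
        AEMeasurable (fun ω => Real.exp (-(∑ r ∈ Finset.Icc 1 n,
            s r * (kTil η κ π v ε (t r) ω - kTil η κ π v ε (t (r - 1)) ω)))) (Pq ε) ∧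
        ∫ ω, Real.exp (-(∑ r ∈ Finset.Icc 1 n,
            s r * (kTil η κ π v ε (t r) ω - kTil η κ π v ε (t (r - 1)) ω))) ∂(Pq ε)
          = ∏ r ∈ Finset.Icc 1 n, ∏ i, (1 - u (s r) ε i) ^
            (Nat.floor (t r * (π ε i * v ε)) - Nat.floor (t (r - 1) * (π ε i * v ε))) := by
    intro n t ht0 ht s hs
    filter_upwards [hE, hM, hR, hπ] with ε h1 h2 h3 h4
    have := incr_formula h2 h3 s hs (fun i r => Nat.floor (t r * (π ε i * v ε)))
      (fun i => by simp [ht0]) n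
      (fun i r hr => Nat.floor_le_floor (mul_le_mul_of_nonneg_right (ht r hr)
        (mul_nonneg (h4.1 i) (hvpos ε h1).le)))
      (q ε) (hq ε h1).1 (hq ε h1).2 (Pq ε) (hmix ε h1)
    simp only [u, sub_sub_cancel]
    exact this
  have hF1 : ∀ s, 0 ≤ s → ∀ᶠ ε in 𝓝[>] (0:ℝ),
        AEMeasurable (fun ω => Real.exp (-(s * kTil η κ π v ε 1 ω))) (Pq ε) ∧
        ∫ ω, Real.exp (-(s * kTil η κ π v ε 1 ω)) ∂(Pq ε)
          = ∏ i, (1 - u s ε i) ^ (Nat.floor (1 * (π ε i * v ε))) := by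
    intro s hs
    have h := hF2 1 (fun r => (r:ℝ)) (by simp) (fun r _ => by simp) (fun _ => s) (fun _ => hs)
    filter_upwards [h] with ε h
    have hk0 : ∀ ω, kTil η κ π v ε 0 ω = 0 := by intro ω; simp [kTil]
    simpa [hk0] using h
  have hfwd : ∀ A : ℝ → ℝ, (∀ s > 0, Tendsto (fun ε => v ε * (1 - lapPhi Pstart κ π ε s))
        (𝓝[>] (0:ℝ)) (𝓝 (A s))) →
      (∀ s > 0, Tendsto (fun ε => ∫ ω, Real.exp (-(s * kTil η κ π v ε 1 ω)) ∂(Pq ε))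
        (𝓝[>] (0:ℝ)) (𝓝 (Real.exp (-(A s))))) := by
    intro A hA s hs
    have h := fwd π (u s) v _ (A s) 1 0 hc0 le_rfl zero_le_one hvinf hπlow (hu0 s hs.le)
      ((hA s hs).congr' (hlap s))
    simp only [sub_zero, mul_one, zero_mul, Nat.floor_zero, Nat.sub_zero] at h
    refine h.congr' ?_
    filter_upwards [hF1 s hs.le] with ε h'
    exact h'.2.symm
  refine ⟨⟨?_, ?_⟩, ?_⟩
  · rintro ⟨A, hA, hApos, hA0⟩
    have hlim := hfwd A hA
    obtain ⟨μ, h1, h2, h3, h4⟩ := exists_mu Pq (by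
        filter_upwards [hE] with ε h
        exact mix_prob (Pstart ε) (hprob ε) (q ε) (hq ε h).1 (hq ε h).2 (Pq ε) (hmix ε h))
      (fun ε ω => kTil η κ π v ε 1 ω) (by
        filter_upwards [hF1 1 zero_le_one] with ε h
        simpa using h.1)
      (fun ε ω => Finset.sum_nonneg fun i _ => Finset.sum_nonneg fun n _ => hκnn _ _ _)
      A hlim hApos hA0
    refine ⟨μ, h1, h2, h3, fun s hs => ?_⟩
    rw [h4 s hs]
    exact hlim s hs
  · rintro ⟨μ, h1, h2, h3, h4⟩
    have hpos : ∀ s > 0, 0 < ∫ x, Real.exp (-(s * x)) ∂μ := fun s hs =>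
      integral_exp_pos (lap_int μ h2 s hs).1
    refine ⟨fun s => -Real.log (∫ x, Real.exp (-(s * x)) ∂μ), ?_, ?_, ?_⟩
    · intro s hs
      refine Tendsto.congr' (hlap s).symm ?_
      refine bwd π (u s) v _ _ hc0 (hpos s hs) hvinf hπlow (hu0 s hs.le) (hu1 s hs.le) ?_
      refine (h4 s hs).congr' ?_
      filter_upwards [hF1 s hs.le] with ε h
      exact h.2
    · intro s hs
      exact neg_pos.2 (Real.log_neg (hpos s hs) (lap_lt_one μ h2 h3 s hs))
    · have := ((lap_tendsto μ h2).log one_ne_zero).neg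
      simpa using this
  · intro A hA hApos hA0 hAz
    refine ⟨hfwd A hA, ?_⟩
    intro n t ht0 ht s hs
    have htnn : ∀ r, r ≤ n → 0 ≤ t r := by
      intro r
      induction r with
      | zero => intro _; rw [ht0]
      | succ r ih => intro hr; exact (ih (by omega)).trans (ht r (by omega))
    have hlimall : ∀ s, 0 ≤ s → Tendsto (fun ε => v ε * ∑ i, π ε i * u s ε i)
        (𝓝[>] (0:ℝ)) (𝓝 (A s)) := by
      intro s hs
      rcases hs.eq_or_lt with rfl | hs
      · have hz : ∀ ε i, u 0 ε i = 0 := by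
          intro ε i
          have := hprob ε i
          simp [u]
        simp only [hz, mul_zero, Finset.sum_const_zero, hAz]
        exact tendsto_const_nhds
      · exact (hA s hs).congr' (hlap s)
    have hprod : Tendsto (fun ε => ∏ r ∈ Finset.Icc 1 n, ∏ i, (1 - u (s r) ε i) ^
            (Nat.floor (t r * (π ε i * v ε)) - Nat.floor (t (r - 1) * (π ε i * v ε))))
        (𝓝[>] (0:ℝ)) (𝓝 (∏ r ∈ Finset.Icc 1 n, Real.exp (-(A (s r) * (t r - t (r - 1)))))) := by
      refine tendsto_finsetProd _ fun r hr => ?_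
      have hr' := Finset.mem_Icc.1 hr
      refine fwd π (u (s r)) v _ (A (s r)) (t r) (t (r - 1)) hc0 (htnn _ (by omega)) ?_ hvinf
        hπlow (hu0 _ (hs r)) (hlimall _ (hs r))
      have := ht (r - 1) (by omega)
      rwa [Nat.sub_add_cancel hr'.1] at this
    rw [← Real.exp_sum, Finset.sum_neg_distrib] at hprod
    refine hprod.congr' ?_
    filter_upwards [hF2 n t ht0 ht s hs] with ε h
    exact h.2.symm
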